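/- arXiv:2510.10093 — 5 statements merged into one kernel-verified Lean document; each statement's English description precedes it below -/
import Mathlib

section
/- Let x>0, let r,s,t ∈ ℂ with r not a positive integer and Re(t) > max{0, 1−Re(r), 1−Re(s), 2−Re(r)−Re(s)}, and let M ∈ ℕ∪{0}. Then (1/Γ(t)) ∫₀^∞ y^{t−1} Li_s(e^{−xy}) ( Li_r(e^{−y}) − Γ(1−r) y^{r−1} − ∑_{k=0}^{M} (−1)^k ζ(r−k) y^k/k! ) dy = Θ(r,s,t,x) − Γ(1−r)Γ(t+r−1)ζ(t+s+r−1)/(x^{t+r−1}Γ(t)) − ∑_{k=0}^{M} ((−1)^k/k!) ζ(r−k) Γ(t+k) ζ(t+k+s)/(x^{t+k} Γ(t)), and in particular both the integral and the double series defining Θ converge absolutely. -/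
open Complex Filter MeasureTheory Set

/-- Polylogarithm `Li_s(z) = ∑_{u ≥ 1} z^u / u^s` for real `z` and complex order `s`. -/
noncomputable def Li (s : ℂ) (z : ℝ) : ℂ :=
  ∑' u : ℕ, (z : ℂ) ^ (u + 1) / ((u + 1 : ℕ) : ℂ) ^ s

/-- The generalized Mordell–Tornheim zeta function
`Θ(r,s,t,x) = ∑_{n,m ≥ 1} n^{-r} m^{-s} (n + m x)^{-t}`. -/
noncomputable def Theta (r s t : ℂ) (x : ℝ) : ℂ :=
  ∑' n : ℕ, ∑' m : ℕ,
    1 / (((n + 1 : ℕ) : ℂ) ^ r * ((m + 1 : ℕ) : ℂ) ^ s *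
      (((n + 1 : ℕ) : ℂ) + ((m + 1 : ℕ) : ℂ) * (x : ℂ)) ^ t)

/-- The integrand of Proposition `first`. -/
noncomputable def integrandF (r s : ℂ) (x : ℝ) (M : ℕ) (t : ℂ) (y : ℝ) : ℂ :=
  (y : ℂ) ^ (t - 1) * Li s (Real.exp (-(x * y))) *
    (Li r (Real.exp (-y)) - Complex.Gamma (1 - r) * (y : ℂ) ^ (r - 1) -
      ∑ k ∈ Finset.range (M + 1),
        (-1) ^ k * riemannZeta (r - (k : ℕ)) * (y : ℂ) ^ (k : ℕ) / (Nat.factorial k : ℂ))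

/-!
For `y > 0`, each of `Li_r(e^{-y})`, `Li_s(e^{-xy})` and their product is a series of exponentials
`∑ aᵢ e^{-pᵢ y}`, whose Mellin transform at `t`, taken term by term, is `Γ(t) ∑ aᵢ pᵢ^{-t}`. The
product gives `Γ(t) Θ(r,s,t,x)`, and `Li_s(e^{-xy})` alone gives `Γ(a) ζ(a+s) / x^a` at `a`. Since
multiplication by `y^a` shifts the Mellin variable by `a`, the subtracted terms contribute the
latter at `a = t + r - 1` and `a = t + k`.

The double series is dominated by a product of two zeta series: write `Re t = d + e` with
`d, e ≥ 0`, `Re r + d > 1` and `Re s + e > 1`, and use `n^d (mx)^e ≤ (n + mx)^{d+e}`.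
-/

/-- The summand `n⁻ʳ m⁻ˢ (n + m x)⁻ᵗ` of the Mordell–Tornheim double series `Theta`. The index `p`
runs over `ℕ × ℕ` and stands for `n = p.1 + 1`, `m = p.2 + 1`. -/
noncomputable def mordellTornheimTerm (r s t : ℂ) (x : ℝ) (p : ℕ × ℕ) : ℂ :=
  1 / (((p.1 + 1 : ℕ) : ℂ) ^ r * ((p.2 + 1 : ℕ) : ℂ) ^ s *
    (((p.1 + 1 : ℕ) : ℂ) + ((p.2 + 1 : ℕ) : ℂ) * (x : ℂ)) ^ t)

section MellinSeries

lemma integrable_of_hasSum_of_summable_integral_norm {α ι E : Type*} [MeasurableSpace α]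
    {μ : Measure α} [Countable ι] [NormedAddCommGroup E] {F : ι → α → E} {f : α → E}
    (hF_int : ∀ i, Integrable (F i) μ) (hF_sum : Summable fun i ↦ ∫ a, ‖F i a‖ ∂μ)
    (hf : ∀ᵐ a ∂μ, HasSum (fun i ↦ F i a) (f a)) : Integrable f μ := by
  refine ⟨aestronglyMeasurable_of_tendsto_ae atTop
    (fun S : Finset ι ↦ (integrable_finsetSum' S fun i _ ↦ hF_int i).1)
    (by simpa only [HasSum, SummationFilter.unconditional_filter, Finset.sum_apply] using hf), ?_⟩
  calc ∫⁻ a, ‖f a‖ₑ ∂μ ≤ ∫⁻ a, ∑' i, ‖F i a‖ₑ ∂μ :=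
        lintegral_mono_ae <| hf.mono fun a ha ↦
          ha.enorm_le_of_bounded ENNReal.summable.hasSum fun _ ↦ le_rfl
    _ = ∑' i, ENNReal.ofReal (∫ a, ‖F i a‖ ∂μ) := by
        rw [lintegral_tsum fun i ↦ (hF_int i).1.enorm]
        simp_rw [ofReal_integral_norm_eq_lintegral_enorm (hF_int _)]
    _ < ⊤ := hF_sum.tsum_ofReal_lt_top

lemma mellinConvergent_exp_neg_mul {p : ℝ} (hp : 0 < p) {s : ℂ} (hs : 0 < s.re) :
    MellinConvergent (fun y ↦ (Real.exp (-p * y) : ℂ)) s := by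
  have h : MellinConvergent (fun y ↦ (Real.exp (-y) : ℂ)) s := by
    simpa only [MellinConvergent, smul_eq_mul, mul_comm] using GammaIntegral_convergent hs
  simpa only [neg_mul] using (MellinConvergent.comp_mul_left hp).2 h

lemma integral_norm_cpow_mul_exp_neg_mul {p : ℝ} (hp : 0 < p) {s : ℂ} (hs : 0 < s.re) :
    ∫ y in Ioi (0 : ℝ), ‖(y : ℂ) ^ (s - 1) * Real.exp (-p * y)‖ = Real.Gamma s.re / p ^ s.re := by
  calc ∫ y in Ioi (0 : ℝ), ‖(y : ℂ) ^ (s - 1) * Real.exp (-p * y)‖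
      = ∫ y in Ioi (0 : ℝ), y ^ (s.re - 1) * Real.exp (-(p * y)) := by
        refine setIntegral_congr_fun measurableSet_Ioi fun y hy ↦ ?_
        simp only [norm_mul, norm_real, Real.norm_eq_abs, Real.abs_exp,
          norm_cpow_eq_rpow_re_of_pos hy, sub_re, one_re, neg_mul]
    _ = Real.Gamma s.re / p ^ s.re := by
        rw [Real.integral_rpow_mul_exp_neg_mul_Ioi hs hp, one_div, Real.inv_rpow hp.le, mul_comm,
          div_eq_mul_inv]

lemma hasMellin_of_hasSum_exp {ι : Type*} [Countable ι] {a : ι → ℂ} {p : ι → ℝ} {F : ℝ → ℂ} {s : ℂ}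
    (hp : ∀ i, 0 < p i) (hs : 0 < s.re)
    (hF : ∀ y ∈ Ioi (0 : ℝ), HasSum (fun i ↦ a i * Real.exp (-p i * y)) (F y))
    (h_sum : Summable fun i ↦ ‖a i‖ / p i ^ s.re) :
    HasMellin F s (Gamma s * ∑' i, a i / (p i : ℂ) ^ s) := by
  refine ⟨integrable_of_hasSum_of_summable_integral_norm
    (F := fun i (y : ℝ) ↦ (y : ℂ) ^ (s - 1) • (a i • (Real.exp (-p i * y) : ℂ)))
    (fun i ↦ (mellinConvergent_exp_neg_mul (hp i) hs).const_smul (a i)) ?_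
    ((ae_restrict_iff' measurableSet_Ioi).2 <| .of_forall fun y hy ↦ (hF y hy).mul_left _), ?_⟩
  · refine (h_sum.mul_left (Real.Gamma s.re)).congr fun i ↦ ?_
    simp_rw [smul_comm _ (a i), norm_smul (a i), smul_eq_mul, integral_const_mul,
      integral_norm_cpow_mul_exp_neg_mul (hp i) hs]
    ring
  · rw [← (hasSum_mellin (fun i ↦ .inr (hp i)) hs hF h_sum).tsum_eq, ← tsum_mul_left]
    simp_rw [mul_div_assoc]

lemma hasMellin_cpow_mul {f : ℝ → ℂ} {s a m : ℂ} (hf : HasMellin f (s + a) m) :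
    HasMellin (fun y : ℝ ↦ (y : ℂ) ^ a * f y) s m :=
  ⟨MellinConvergent.cpow_smul.2 hf.1, (mellin_cpow_smul f s a).trans hf.2⟩

lemma hasMellin_mul_sub_cpow {g h : ℝ → ℂ} {s a A B : ℂ} (hgh : HasMellin (fun y ↦ g y * h y) s A)
    (hg : HasMellin g (s + a) B) (c : ℂ) :
    HasMellin (fun y : ℝ ↦ g y * (h y - c * (y : ℂ) ^ a)) s (A - c * B) := by
  have hcg := hasMellin_const_smul (hasMellin_cpow_mul hg).1 c
  rw [(hasMellin_cpow_mul hg).2] at hcg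
  have hsub := hasMellin_sub hgh.1 hcg.1
  rw [hgh.2, hcg.2] at hsub
  convert! hsub using 2 with y
  simp only [smul_eq_mul]
  ring

lemma hasMellin_mul_sub_sum_cpow {ι : Type*} {g h : ℝ → ℂ} {s A : ℂ} {a B : ι → ℂ} {S : Finset ι}
    (hgh : HasMellin (fun y ↦ g y * h y) s A) (hg : ∀ i ∈ S, HasMellin g (s + a i) (B i))
    (c : ι → ℂ) :
    HasMellin (fun y : ℝ ↦ g y * (h y - ∑ i ∈ S, c i * (y : ℂ) ^ a i)) s
      (A - ∑ i ∈ S, c i * B i) := by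
  classical
  induction S using Finset.induction_on with
  | empty => simpa only [Finset.sum_empty, sub_zero] using hgh
  | insert i S hi ih =>
    simp_rw [Finset.sum_insert hi, add_comm (c i * _), ← sub_sub]
    exact hasMellin_mul_sub_cpow (ih fun j hj ↦ hg j (Finset.mem_insert_of_mem hj))
      (hg i (Finset.mem_insert_self i S)) (c i)

end MellinSeries

section Polylogarithm

lemma hasSum_Li (s : ℂ) {z : ℝ} (hz : |z| < 1) :
    HasSum (fun u : ℕ ↦ (z : ℂ) ^ (u + 1) / ((u + 1 : ℕ) : ℂ) ^ s) (Li s z) := by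
  obtain ⟨k, hk⟩ := exists_nat_ge (-s.re)
  have hgeom : Summable fun u : ℕ ↦ ((u + 1 : ℕ) : ℝ) ^ k * |z| ^ (u + 1) :=
    (summable_pow_mul_geometric_of_norm_lt_one (R := ℝ) (r := |z|) k
      (by simpa using hz)).comp_injective (add_left_injective 1)
  refine (hgeom.of_norm_bounded fun u ↦ ?_).hasSum
  calc ‖(z : ℂ) ^ (u + 1) / ((u + 1 : ℕ) : ℂ) ^ s‖
      = ((u + 1 : ℕ) : ℝ) ^ (-s.re) * |z| ^ (u + 1) := by
        rw [norm_div, norm_pow, norm_real, Real.norm_eq_abs, norm_natCast_cpow_of_pos u.succ_pos,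
          Real.rpow_neg u.succ.cast_nonneg, div_eq_inv_mul]
    _ ≤ ((u + 1 : ℕ) : ℝ) ^ k * |z| ^ (u + 1) := by
        gcongr
        rw [← Real.rpow_natCast]
        exact Real.rpow_le_rpow_of_exponent_le (by simp) hk

lemma hasSum_Li_exp_neg (s : ℂ) {y : ℝ} (hy : 0 < y) :
    HasSum (fun u : ℕ ↦ 1 / ((u + 1 : ℕ) : ℂ) ^ s * Real.exp (-((u + 1 : ℕ) : ℝ) * y))
      (Li s (Real.exp (-y))) := by
  convert! hasSum_Li s (z := Real.exp (-y)) (by simpa using hy) using 2 with u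
  rw [← ofReal_pow, ← Real.exp_nat_mul, mul_neg, neg_mul, mul_comm, mul_one_div]

lemma hasMellin_Li_exp_neg {s a : ℂ} (ha : 0 < a.re) (has : 1 < (a + s).re) :
    HasMellin (fun y : ℝ ↦ Li s (Real.exp (-y))) a (Gamma a * riemannZeta (a + s)) := by
  have hterm (u : ℕ) : 1 / ((u + 1 : ℕ) : ℂ) ^ s / (((u + 1 : ℕ) : ℝ) : ℂ) ^ a =
      1 / ((u + 1 : ℕ) : ℂ) ^ (a + s) := by
    rw [ofReal_natCast, div_div, add_comm a s, cpow_add _ _ (Nat.cast_ne_zero.2 u.succ_ne_zero)]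
  have hzeta : Summable fun u : ℕ ↦ 1 / ((u + 1 : ℕ) : ℂ) ^ (a + s) :=
    (summable_one_div_nat_cpow.2 has).comp_injective (add_left_injective 1)
  have hmellin := hasMellin_of_hasSum_exp (F := fun y ↦ Li s (Real.exp (-y)))
    (p := fun u : ℕ ↦ ((u + 1 : ℕ) : ℝ)) (fun u ↦ Nat.cast_pos.2 u.succ_pos) ha
    (fun y hy ↦ hasSum_Li_exp_neg s hy) <| hzeta.norm.congr fun u ↦ by
      rw [← hterm, norm_div, norm_cpow_eq_rpow_re_of_pos (Nat.cast_pos.2 u.succ_pos)]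
  simp_rw [hterm] at hmellin
  simpa only [zeta_eq_tsum_one_div_nat_add_one_cpow has, Nat.cast_add_one] using hmellin

lemma hasMellin_Li_exp_neg_mul {s a : ℂ} {x : ℝ} (hx : 0 < x) (ha : 0 < a.re)
    (has : 1 < (a + s).re) :
    HasMellin (fun y : ℝ ↦ Li s (Real.exp (-(x * y)))) a
      (Gamma a * riemannZeta (a + s) / (x : ℂ) ^ a) := by
  obtain ⟨hconv, hmellin⟩ := hasMellin_Li_exp_neg ha has
  refine ⟨(MellinConvergent.comp_mul_left (f := fun y ↦ Li s (Real.exp (-y))) hx).2 hconv, ?_⟩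
  rw [mellin_comp_mul_left (fun y ↦ Li s (Real.exp (-y))) a hx, hmellin, smul_eq_mul, cpow_neg,
    div_eq_inv_mul]

end Polylogarithm

section MordellTornheim

lemma rpow_mul_rpow_le_add_rpow {u v d e : ℝ} (hu : 0 ≤ u) (hv : 0 ≤ v) (hd : 0 ≤ d)
    (he : 0 ≤ e) : u ^ d * v ^ e ≤ (u + v) ^ (d + e) := by
  rw [Real.rpow_add_of_nonneg (add_nonneg hu hv) hd he]
  gcongr <;> linarith

lemma summable_mordellTornheim_rpow {a b c x : ℝ} (hx : 0 < x) (hc : 0 < c) (hac : 1 < a + c)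
    (hbc : 1 < b + c) (habc : 2 < a + b + c) :
    Summable fun p : ℕ × ℕ ↦ 1 / (((p.1 + 1 : ℕ) : ℝ) ^ a * ((p.2 + 1 : ℕ) : ℝ) ^ b *
      (((p.1 + 1 : ℕ) : ℝ) + ((p.2 + 1 : ℕ) : ℝ) * x) ^ c) := by
  obtain ⟨d, e, hd, he, hda, heb, rfl⟩ :
      ∃ d e, 0 ≤ d ∧ 0 ≤ e ∧ 1 < a + d ∧ 1 < b + e ∧ d + e = c := by
    obtain ⟨d, hlow, hupp⟩ : ∃ d, max 0 (1 - a) < d ∧ d < min c (b + c - 1) :=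
      exists_between (max_lt (lt_min hc (by linarith)) (lt_min (by linarith) (by linarith)))
    obtain ⟨hd, hda⟩ := max_lt_iff.1 hlow
    obtain ⟨hdc, hdb⟩ := lt_min_iff.1 hupp
    exact ⟨d, c - d, hd.le, by linarith, by linarith, by linarith, by ring⟩
  have hzeta {σ : ℝ} (hσ : 1 < σ) : Summable fun n : ℕ ↦ 1 / ((n + 1 : ℕ) : ℝ) ^ σ :=
    (Real.summable_one_div_nat_rpow.2 hσ).comp_injective (add_left_injective 1)
  have hprod := ((hzeta hda).mul_of_nonneg (hzeta heb) (fun _ ↦ by positivity)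
    (fun _ ↦ by positivity)).mul_right (1 / x ^ e)
  refine hprod.of_nonneg_of_le (fun _ ↦ by positivity) fun ⟨n, m⟩ ↦ ?_
  have hn : (0 : ℝ) < (n + 1 : ℕ) := by positivity
  have hm : (0 : ℝ) < (m + 1 : ℕ) := by positivity
  dsimp only
  generalize ((n + 1 : ℕ) : ℝ) = N at *
  generalize ((m + 1 : ℕ) : ℝ) = K at *
  calc 1 / (N ^ a * K ^ b * (N + K * x) ^ (d + e))
      ≤ 1 / (N ^ a * K ^ b * (N ^ d * (K * x) ^ e)) := by
        gcongr
        exact rpow_mul_rpow_le_add_rpow hn.le (by positivity) hd he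
    _ = 1 / N ^ (a + d) * (1 / K ^ (b + e)) * (1 / x ^ e) := by
        rw [Real.mul_rpow hm.le hx.le, Real.rpow_add hn, Real.rpow_add hm]
        field_simp

lemma mordellTornheimTerm_eq_div (r s t : ℂ) (x : ℝ) (p : ℕ × ℕ) :
    mordellTornheimTerm r s t x p = 1 / ((p.1 + 1 : ℕ) : ℂ) ^ r * (1 / ((p.2 + 1 : ℕ) : ℂ) ^ s) /
      ((((p.1 + 1 : ℕ) : ℝ) + ((p.2 + 1 : ℕ) : ℝ) * x : ℝ) : ℂ) ^ t := by
  rw [mordellTornheimTerm, one_div_mul_one_div, div_div]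
  push_cast
  rfl

lemma norm_mordellTornheimTerm (r s t : ℂ) {x : ℝ} (hx : 0 < x) (p : ℕ × ℕ) :
    ‖mordellTornheimTerm r s t x p‖ =
      1 / (((p.1 + 1 : ℕ) : ℝ) ^ r.re * ((p.2 + 1 : ℕ) : ℝ) ^ s.re *
        (((p.1 + 1 : ℕ) : ℝ) + ((p.2 + 1 : ℕ) : ℝ) * x) ^ t.re) := by
  rw [mordellTornheimTerm_eq_div, norm_div, norm_mul, norm_div, norm_div, norm_one,
    norm_natCast_cpow_of_pos p.1.succ_pos, norm_natCast_cpow_of_pos p.2.succ_pos,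
    norm_cpow_eq_rpow_re_of_pos (by positivity), one_div_mul_one_div, div_div]

variable {r s t : ℂ} {x : ℝ}

lemma summable_norm_mordellTornheimTerm (hx : 0 < x) (ht : 0 < t.re) (hrt : 1 < (r + t).re)
    (hst : 1 < (s + t).re) (hrst : 2 < (r + s + t).re) :
    Summable fun p ↦ ‖mordellTornheimTerm r s t x p‖ := by
  simp only [add_re] at hrt hst hrst
  simpa only [norm_mordellTornheimTerm r s t hx] using
    summable_mordellTornheim_rpow hx ht hrt hst hrst

lemma hasSum_Li_exp_neg_mul_mul_Li_exp_neg (r s : ℂ) (hx : 0 < x) {y : ℝ} (hy : 0 < y) :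
    HasSum (fun p : ℕ × ℕ ↦ 1 / ((p.1 + 1 : ℕ) : ℂ) ^ r * (1 / ((p.2 + 1 : ℕ) : ℂ) ^ s) *
        Real.exp (-(((p.1 + 1 : ℕ) : ℝ) + ((p.2 + 1 : ℕ) : ℝ) * x) * y))
      (Li s (Real.exp (-(x * y))) * Li r (Real.exp (-y))) := by
  have hr := hasSum_Li_exp_neg r hy
  have hs := hasSum_Li_exp_neg s (mul_pos hx hy)
  have hmul := hr.mul hs <| summable_mul_of_summable_norm (R := ℂ)
    (f := fun n : ℕ ↦ 1 / ((n + 1 : ℕ) : ℂ) ^ r * Real.exp (-((n + 1 : ℕ) : ℝ) * y))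
    (g := fun m : ℕ ↦ 1 / ((m + 1 : ℕ) : ℂ) ^ s * Real.exp (-((m + 1 : ℕ) : ℝ) * (x * y)))
    hr.summable.norm hs.summable.norm
  rw [mul_comm]
  convert! hmul using 2 with p
  have hexp : Real.exp (-(((p.1 + 1 : ℕ) : ℝ) + ((p.2 + 1 : ℕ) : ℝ) * x) * y) =
      Real.exp (-((p.1 + 1 : ℕ) : ℝ) * y) * Real.exp (-((p.2 + 1 : ℕ) : ℝ) * (x * y)) := by
    rw [← Real.exp_add]
    ring_nf
  rw [hexp, ofReal_mul, mul_mul_mul_comm]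

lemma hasMellin_Li_exp_neg_mul_mul_Li_exp_neg (hx : 0 < x) (ht : 0 < t.re)
    (hrt : 1 < (r + t).re) (hst : 1 < (s + t).re) (hrst : 2 < (r + s + t).re) :
    HasMellin (fun y : ℝ ↦ Li s (Real.exp (-(x * y))) * Li r (Real.exp (-y))) t
      (Gamma t * Theta r s t x) := by
  have hsum := summable_norm_mordellTornheimTerm hx ht hrt hst hrst
  have hTheta : Theta r s t x = ∑' p, mordellTornheimTerm r s t x p := hsum.of_norm.tsum_prod.symm
  simp_rw [hTheta, mordellTornheimTerm_eq_div]
  refine hasMellin_of_hasSum_exp (fun p ↦ by positivity) ht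
    (fun y hy ↦ hasSum_Li_exp_neg_mul_mul_Li_exp_neg r s hx hy) (hsum.congr fun p ↦ ?_)
  rw [mordellTornheimTerm_eq_div, norm_div, norm_cpow_eq_rpow_re_of_pos (by positivity)]

lemma hasMellin_Li_exp_neg_mul_mul_sub (hx : 0 < x) (ht : 0 < t.re)
    (hrt : 1 < (r + t).re) (hst : 1 < (s + t).re) (hrst : 2 < (r + s + t).re)
    (b : ℂ) (c : ℕ → ℂ) (S : Finset ℕ) :
    HasMellin (fun y : ℝ ↦ Li s (Real.exp (-(x * y))) *
        (Li r (Real.exp (-y)) - b * (y : ℂ) ^ (r - 1) - ∑ k ∈ S, c k * (y : ℂ) ^ k)) t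
      (Gamma t * Theta r s t x -
        b * (Gamma (t + r - 1) * riemannZeta (t + s + r - 1) / (x : ℂ) ^ (t + r - 1)) -
        ∑ k ∈ S, c k * (Gamma (t + k) * riemannZeta (t + k + s) / (x : ℂ) ^ (t + k))) := by
  have hmain := hasMellin_Li_exp_neg_mul_mul_Li_exp_neg hx ht hrt hst hrst
  simp only [add_re] at hrt hst hrst
  have hpole := hasMellin_Li_exp_neg_mul (s := s) (a := t + (r - 1)) hx
    (by simp only [add_re, sub_re, one_re]; linarith)
    (by simp only [add_re, sub_re, one_re]; linarith)
  have htaylor (k : ℕ) := hasMellin_Li_exp_neg_mul (s := s) (a := t + k) hx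
    (by simp only [add_re, natCast_re]; positivity)
    (by simp only [add_re, natCast_re]; linarith [k.cast_nonneg (α := ℝ)])
  have h := hasMellin_mul_sub_sum_cpow (hasMellin_mul_sub_cpow hmain hpole b)
    (fun k (_ : k ∈ S) ↦ htaylor k) c
  simp only [cpow_natCast] at h
  rwa [show t + (r - 1) + s = t + s + r - 1 by ring, ← add_sub_assoc] at h

end MordellTornheim

theorem statement0 (x : ℝ) (hx : 0 < x) (r s t : ℂ)
    (hr : ∀ n : ℕ, 0 < n → r ≠ (n : ℂ))
    (ht : max (max 0 (1 - r.re)) (max (1 - s.re) (2 - r.re - s.re)) < t.re)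
    (M : ℕ) :
    MeasureTheory.IntegrableOn (integrandF r s x M t) (Set.Ioi 0) ∧
    Summable (fun p : ℕ × ℕ =>
      ‖1 / (((p.1 + 1 : ℕ) : ℂ) ^ r * ((p.2 + 1 : ℕ) : ℂ) ^ s *
        (((p.1 + 1 : ℕ) : ℂ) + ((p.2 + 1 : ℕ) : ℂ) * (x : ℂ)) ^ t)‖) ∧
    (1 / Complex.Gamma t) * ∫ y in Set.Ioi (0 : ℝ), integrandF r s x M t y =
      Theta r s t x
      - Complex.Gamma (1 - r) * Complex.Gamma (t + r - 1) * riemannZeta (t + s + r - 1) /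
          ((x : ℂ) ^ (t + r - 1) * Complex.Gamma t)
      - ∑ k ∈ Finset.range (M + 1),
          ((-1) ^ k / (Nat.factorial k : ℂ)) * riemannZeta (r - (k : ℕ)) *
            Complex.Gamma (t + (k : ℕ)) * riemannZeta (t + (k : ℕ) + s) /
            ((x : ℂ) ^ (t + (k : ℕ)) * Complex.Gamma t) := by
  obtain ⟨⟨ht0, hrt⟩, hst, hrst⟩ : (0 < t.re ∧ 1 - r.re < t.re) ∧ 1 - s.re < t.re ∧
      2 - r.re - s.re < t.re := by simpa only [max_lt_iff] using ht
  replace hrt : 1 < (r + t).re := by rw [add_re]; linarith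
  replace hst : 1 < (s + t).re := by rw [add_re]; linarith
  replace hrst : 2 < (r + s + t).re := by rw [add_re, add_re]; linarith
  obtain ⟨hconv, hmellin⟩ := hasMellin_Li_exp_neg_mul_mul_sub hx ht0 hrt hst hrst (Gamma (1 - r))
    (fun k ↦ (-1) ^ k * riemannZeta (r - k) / (Nat.factorial k : ℂ)) (Finset.range (M + 1))
  have hF : integrandF r s x M t = fun y : ℝ ↦ (y : ℂ) ^ (t - 1) • (Li s (Real.exp (-(x * y))) *
      (Li r (Real.exp (-y)) - Gamma (1 - r) * (y : ℂ) ^ (r - 1) - ∑ k ∈ Finset.range (M + 1),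
        (-1) ^ k * riemannZeta (r - k) / (Nat.factorial k : ℂ) * (y : ℂ) ^ k)) := by
    funext y
    simp only [integrandF, smul_eq_mul, mul_assoc, div_mul_eq_mul_div]
  rw [mellin, ← hF] at hmellin
  refine ⟨hF ▸ hconv, summable_norm_mordellTornheimTerm hx ht0 hrt hst hrst, ?_⟩
  have hΓ : Gamma t ≠ 0 := Gamma_ne_zero_of_re_pos ht0
  rw [hmellin, mul_sub, mul_sub, Finset.mul_sum, one_div, inv_mul_cancel_left₀ hΓ]
  congr 1
  · ring
  · exact Finset.sum_congr rfl fun k _ ↦ by ring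
end

section
/- Let x>0, let r ∈ ℕ (r ≥ 1), let s,t ∈ ℂ with Re(t) > max{0, 1−r, 1−Re(s), 2−r−Re(s)}, and let M ∈ ℕ∪{0} with M ≥ r−1. Then (1/Γ(t)) ∫₀^∞ y^{t−1} Li_s(e^{−xy}) ( Li_r(e^{−y}) − (−1)^{r−1}(H_{r−1} − log y) y^{r−1}/(r−1)! − ∑_{k=0, k≠r−1}^{M} (−1)^k ζ(r−k) y^k/k! ) dy = Θ(r,s,t,x) − ∑_{k=0, k≠r−1}^{M} ((−1)^k/k!) ζ(r−k) Γ(t+k) ζ(t+k+s)/(x^{t+k} Γ(t)) + ((−1)^r Γ(t+r−1)/(x^{t+r−1}(r−1)!Γ(t))) ( ζ(t+s+r−1)(H_{r−1} − ψ(t+r−1) + log x) − ζ'(t+s+r−1) ), where ζ' is the derivative of ζ. -/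
open Complex Filter MeasureTheory Set

/-- The digamma function `ψ = Γ'/Γ` on the complex numbers. -/
noncomputable def cdigamma (z : ℂ) : ℂ := deriv Complex.Gamma z / Complex.Gamma z

/-!
Since `Li s (exp (-x y)) = ∑ m, m⁻ˢ exp (-m x y)`, Mellin transforms of polylogarithms in `exp (-y)`
are Dirichlet series times `Γ`: the transform of `Li s (exp (-x y))` at `t` is `Γ(t) ζ(t + s) / xᵗ`,
and that of `Li r (exp (-y)) * Li s (exp (-x y))` is `Γ(t) Θ(r, s, t, x)`. A factor `yᵏ` shifts `t`
to `t + k`, and a factor `log y` differentiates in `t`, which produces `ψ`, `log x` and `ζ'`. The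
integral in the theorem converges term by term, so it is a linear combination of these transforms.
-/

theorem exp_neg_le_rpow {b u : ℝ} (hb : 0 < b) (hu : 0 < u) :
    Real.exp (-u) ≤ b ^ b * u ^ (-b) := by
  have hlin : u / b ≤ Real.exp (u / b) := by linarith [Real.add_one_le_exp (u / b)]
  have hpow : (u / b) ^ b ≤ Real.exp u := by
    calc (u / b) ^ b ≤ Real.exp (u / b) ^ b := by gcongr
      _ = Real.exp u := by rw [← Real.exp_mul, div_mul_cancel₀ _ hb.ne']
  calc Real.exp (-u) = (Real.exp u)⁻¹ := Real.exp_neg u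
    _ ≤ ((u / b) ^ b)⁻¹ := by gcongr
    _ = b ^ b * u ^ (-b) := by
      rw [Real.div_rpow hu.le hb.le, inv_div, div_eq_mul_inv, Real.rpow_neg hu.le]

theorem summable_natCast_succ_rpow_neg {τ : ℝ} (hτ : 1 < τ) :
    Summable fun u : ℕ => ((u + 1 : ℕ) : ℝ) ^ (-τ) :=
  (summable_nat_add_iff 1).2 (Real.summable_nat_rpow.2 (neg_lt_neg hτ))

section Mellin

variable {E : Type*} [NormedAddCommGroup E] [NormedSpace ℂ E] {f g : ℝ → E} {s : ℂ} {m n : E}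

theorem hasMellin_sub_of_hasMellin (hf : HasMellin f s m) (hg : HasMellin g s n) :
    HasMellin (fun y => f y - g y) s (m - n) := by
  simpa only [hf.2, hg.2] using hasMellin_sub hf.1 hg.1

theorem hasMellin_const_smul_of_hasMellin (c : ℂ) (hf : HasMellin f s m) :
    HasMellin (fun y => c • f y) s (c • m) := by
  simpa only [hf.2] using hasMellin_const_smul hf.1 c

theorem hasMellin_pow_smul_of_hasMellin {k : ℕ} (hf : HasMellin f (s + k) m) :
    HasMellin (fun y => (y : ℂ) ^ k • f y) s m := by
  simp only [← Complex.cpow_natCast]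
  exact ⟨MellinConvergent.cpow_smul.2 hf.1, (mellin_cpow_smul f s k).trans hf.2⟩

theorem hasMellin_finset_sum {ι : Type*} (K : Finset ι) {F : ι → ℝ → E} {M : ι → E}
    (hF : ∀ k ∈ K, HasMellin (F k) s (M k)) :
    HasMellin (fun y => ∑ k ∈ K, F k y) s (∑ k ∈ K, M k) := by
  constructor
  · simpa only [MellinConvergent, Finset.smul_sum] using!
      integrable_finsetSum K fun k hk => (hF k hk).1
  · simp only [mellin, Finset.smul_sum]
    rw [integral_finsetSum K fun k hk => (hF k hk).1]
    exact Finset.sum_congr rfl fun k hk => (hF k hk).2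

end Mellin

/-- `F y = ∑ i, a i * exp (-p i * y)` for `y > 0`, where the exponents `p i` are positive and the
general Dirichlet series `∑ i, a i / p i ^ τ` converges absolutely for all real `τ > σ`. The bound
`σ` is required to be nonnegative, because the Mellin transform of `exp (-p i * y)` only converges
in the right half-plane. -/
structure HasExpSeries {ι : Type*} (a : ι → ℂ) (p : ι → ℝ) (σ : ℝ) (F : ℝ → ℂ) : Prop where
  exponent_pos (i : ι) : 0 < p i
  abscissa_nonneg : 0 ≤ σ
  summable_norm_div_rpow {τ : ℝ} : σ < τ → Summable fun i => ‖a i‖ / p i ^ τ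
  eq_tsum {y : ℝ} : 0 < y → F y = ∑' i, a i * (Real.exp (-p i * y) : ℂ)

namespace HasExpSeries

variable {ι : Type*} {a : ι → ℂ} {p : ι → ℝ} {σ : ℝ} {F : ℝ → ℂ} {t : ℂ}

theorem norm_term_le (hF : HasExpSeries a p σ F) {τ y : ℝ} (hτ : 0 < τ) (hy : 0 < y) (i : ι) :
    ‖a i * (Real.exp (-p i * y) : ℂ)‖ ≤ τ ^ τ * y ^ (-τ) * (‖a i‖ / p i ^ τ) := by
  have hp := hF.exponent_pos i
  rw [norm_mul, Complex.norm_real, Real.norm_eq_abs, Real.abs_exp, neg_mul]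
  calc ‖a i‖ * Real.exp (-(p i * y)) ≤ ‖a i‖ * (τ ^ τ * (p i * y) ^ (-τ)) := by
        gcongr
        exact exp_neg_le_rpow hτ (by positivity)
    _ = τ ^ τ * y ^ (-τ) * (‖a i‖ / p i ^ τ) := by
        rw [Real.mul_rpow hp.le hy.le, Real.rpow_neg hp.le]
        ring

theorem hasSum (hF : HasExpSeries a p σ F) {y : ℝ} (hy : 0 < y) :
    HasSum (fun i => a i * (Real.exp (-p i * y) : ℂ)) (F y) := by
  have hσ : 0 < σ + 1 := by linarith [hF.abscissa_nonneg]
  rw [hF.eq_tsum hy]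
  exact (Summable.of_norm_bounded ((hF.summable_norm_div_rpow (lt_add_one σ)).mul_left _)
    (hF.norm_term_le hσ hy)).hasSum

theorem norm_le (hF : HasExpSeries a p σ F) {τ y : ℝ} (hτ : σ < τ) (hy : 0 < y) :
    ‖F y‖ ≤ (τ ^ τ * ∑' i, ‖a i‖ / p i ^ τ) * ‖y ^ (-τ)‖ := by
  rw [hF.eq_tsum hy, Real.norm_of_nonneg (by positivity), mul_right_comm]
  exact tsum_of_norm_bounded ((hF.summable_norm_div_rpow hτ).hasSum.mul_left _)
    (hF.norm_term_le (hF.abscissa_nonneg.trans_lt hτ) hy)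

theorem isBigO_atTop (hF : HasExpSeries a p σ F) {τ : ℝ} (hτ : σ < τ) :
    F =O[atTop] fun y : ℝ => y ^ (-τ) :=
  .of_bound _ ((eventually_gt_atTop 0).mono fun _ hy => hF.norm_le hτ hy)

theorem isBigO_nhdsGT_zero (hF : HasExpSeries a p σ F) {τ : ℝ} (hτ : σ < τ) :
    F =O[nhdsWithin 0 (Ioi 0)] fun y : ℝ => y ^ (-τ) :=
  .of_bound _ (eventually_mem_nhdsWithin.mono fun _ hy => hF.norm_le hτ hy)

theorem continuousOn (hF : HasExpSeries a p σ F) : ContinuousOn F (Ioi 0) := by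
  intro z (hz : 0 < z)
  suffices ContinuousOn F (Ioi (z / 2)) from
    (this.continuousAt (Ioi_mem_nhds (half_lt_self hz))).continuousWithinAt
  have hseries : ContinuousOn (fun y => ∑' i, a i * (Real.exp (-p i * y) : ℂ)) (Ioi (z / 2)) := by
    refine continuousOn_tsum (fun i => by fun_prop) (hF.hasSum (half_pos hz)).summable.norm
      fun i y (hy : z / 2 < y) => ?_
    have hp := hF.exponent_pos i
    simp only [norm_mul, Complex.norm_real, Real.norm_eq_abs, Real.abs_exp, neg_mul]
    gcongr
  exact hseries.congr fun y hy => hF.eq_tsum ((half_pos hz).trans hy)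

theorem locallyIntegrableOn (hF : HasExpSeries a p σ F) : LocallyIntegrableOn F (Ioi 0) :=
  hF.continuousOn.locallyIntegrableOn measurableSet_Ioi

theorem hasMellin [Countable ι] (hF : HasExpSeries a p σ F) (ht : σ < t.re) :
    HasMellin F t (Complex.Gamma t * ∑' i, a i / (p i : ℂ) ^ t) := by
  obtain ⟨τ, hστ, hτt⟩ := exists_between ht
  have hsum := hasSum_mellin (fun i => .inr (hF.exponent_pos i)) (hF.abscissa_nonneg.trans_lt ht)
    (fun y hy => hF.hasSum hy) (hF.summable_norm_div_rpow ht)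
  refine ⟨mellinConvergent_of_isBigO_rpow hF.locallyIntegrableOn
    (hF.isBigO_atTop (ht.trans (lt_add_one _))) (lt_add_one _) (hF.isBigO_nhdsGT_zero hστ) hτt, ?_⟩
  simp only [← hsum.tsum_eq, mul_div_assoc, tsum_mul_left]

theorem hasMellin_log_smul (hF : HasExpSeries a p σ F) (ht : σ < t.re) {m : ℂ}
    (hm : HasDerivAt (mellin F) m t) : HasMellin (fun y => Real.log y • F y) t m := by
  obtain ⟨τ, hστ, hτt⟩ := exists_between ht
  have hlog := mellin_hasDerivAt_of_isBigO_rpow hF.locallyIntegrableOn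
    (hF.isBigO_atTop (ht.trans (lt_add_one _))) (lt_add_one _) (hF.isBigO_nhdsGT_zero hστ) hτt
  exact ⟨hlog.1, hlog.2.unique hm⟩

section Mul

variable {κ : Type*} {b : κ → ℂ} {q : κ → ℝ} {σ' : ℝ} {G : ℝ → ℂ}

theorem summable_norm_mul_div_add_rpow (hF : HasExpSeries a p σ F) (hG : HasExpSeries b q σ' G)
    {τ : ℝ} (hτ : σ + σ' < τ) :
    Summable fun i : ι × κ => ‖a i.1 * b i.2‖ / (p i.1 + q i.2) ^ τ := by
  obtain ⟨α, hσα, hατ⟩ := exists_between (lt_sub_iff_add_lt.2 hτ)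
  have hσβ : σ' < τ - α := by linarith
  have hα : 0 ≤ α := hF.abscissa_nonneg.trans hσα.le
  have hβ : 0 ≤ τ - α := hG.abscissa_nonneg.trans hσβ.le
  have hp i : 0 < p i := hF.exponent_pos i
  have hq j : 0 < q j := hG.exponent_pos j
  have hbound := (hF.summable_norm_div_rpow hσα).mul_of_nonneg (hG.summable_norm_div_rpow hσβ)
    (fun i => div_nonneg (norm_nonneg _) (Real.rpow_nonneg (hp i).le _))
    fun j => div_nonneg (norm_nonneg _) (Real.rpow_nonneg (hq j).le _)
  refine hbound.of_nonneg_of_le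
    (fun i => div_nonneg (norm_nonneg _) (Real.rpow_nonneg (add_pos (hp _) (hq _)).le _)) ?_
  rintro ⟨i, j⟩
  have hpi := hp i
  have hqj := hq j
  have hsplit : p i ^ α * q j ^ (τ - α) ≤ (p i + q j) ^ τ := by
    calc p i ^ α * q j ^ (τ - α) ≤ (p i + q j) ^ α * (p i + q j) ^ (τ - α) := by
          gcongr <;> linarith
      _ = (p i + q j) ^ τ := by rw [← Real.rpow_add (by positivity), add_sub_cancel]
  rw [norm_mul, div_mul_div_comm]
  gcongr

theorem mul (hF : HasExpSeries a p σ F) (hG : HasExpSeries b q σ' G) :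
    HasExpSeries (fun i : ι × κ => a i.1 * b i.2) (fun i => p i.1 + q i.2) (σ + σ')
      (fun y => F y * G y) where
  exponent_pos i := add_pos (hF.exponent_pos i.1) (hG.exponent_pos i.2)
  abscissa_nonneg := add_nonneg hF.abscissa_nonneg hG.abscissa_nonneg
  summable_norm_div_rpow := hF.summable_norm_mul_div_add_rpow hG
  eq_tsum {y} hy := by
    have hFy := hF.hasSum hy
    have hGy := hG.hasSum hy
    rw [← hFy.tsum_eq, ← hGy.tsum_eq,
      tsum_mul_tsum_of_summable_norm hFy.summable.norm hGy.summable.norm]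
    refine tsum_congr fun i => ?_
    rw [neg_add, add_mul, Real.exp_add, Complex.ofReal_mul]
    ring

end Mul

end HasExpSeries

section Polylogarithm

variable {x : ℝ} {t : ℂ}

theorem hasExpSeries_Li_exp (s : ℂ) (hx : 0 < x) :
    HasExpSeries (fun u : ℕ => 1 / ((u + 1 : ℕ) : ℂ) ^ s) (fun u => ((u + 1 : ℕ) : ℝ) * x)
      (max 0 (1 - s.re)) (fun y => Li s (Real.exp (-(x * y)))) where
  exponent_pos u := by positivity
  abscissa_nonneg := le_max_left _ _
  summable_norm_div_rpow {τ} hτ := by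
    have hsτ : 1 < s.re + τ := by linarith [(le_max_right _ _).trans_lt hτ]
    refine ((summable_natCast_succ_rpow_neg hsτ).mul_left (x ^ (-τ))).congr fun u => ?_
    have hu : (0 : ℝ) < ((u + 1 : ℕ) : ℝ) := by positivity
    rw [norm_div, norm_one, Complex.norm_natCast_cpow_of_pos u.succ_pos,
      Real.mul_rpow hu.le hx.le, Real.rpow_neg hu.le, Real.rpow_add hu, Real.rpow_neg hx.le]
    field_simp
  eq_tsum {y} _ := tsum_congr fun u => by
    rw [← Complex.ofReal_pow, ← Real.exp_nat_mul, div_eq_mul_one_div, mul_comm]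
    congr 3
    ring

theorem hasMellin_Li_exp (s : ℂ) (hx : 0 < x) (ht : max 0 (1 - s.re) < t.re) :
    HasMellin (fun y => Li s (Real.exp (-(x * y)))) t
      (Complex.Gamma t * riemannZeta (t + s) / (x : ℂ) ^ t) := by
  have hts : 1 < (t + s).re := by
    rw [Complex.add_re]
    linarith [(le_max_right _ _).trans_lt ht]
  convert (hasExpSeries_Li_exp s hx).hasMellin ht using 1
  rw [zeta_eq_tsum_one_div_nat_add_one_cpow hts, mul_div_assoc, ← tsum_div_const]
  congr 1
  refine tsum_congr fun u => ?_
  have hu : ((u + 1 : ℕ) : ℂ) ≠ 0 := Nat.cast_ne_zero.2 u.succ_ne_zero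
  rw [Complex.ofReal_mul, Complex.mul_cpow_ofReal_nonneg (by positivity) hx.le,
    Complex.ofReal_natCast, ← Nat.cast_succ, Complex.cpow_add _ _ hu]
  field_simp

theorem hasDerivAt_Gamma_of_re_pos (ht : 0 < t.re) :
    HasDerivAt Complex.Gamma (Complex.Gamma t * cdigamma t) t := by
  rw [cdigamma, mul_div_cancel₀ _ (Complex.Gamma_ne_zero_of_re_pos ht)]
  refine (Complex.differentiableAt_Gamma t fun m hm => ?_).hasDerivAt
  rw [hm, Complex.neg_re, Complex.natCast_re] at ht
  linarith [(Nat.cast_nonneg m : (0 : ℝ) ≤ m)]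

theorem hasDerivAt_mellin_Li_exp (s : ℂ) (hx : 0 < x) (ht : max 0 (1 - s.re) < t.re) :
    HasDerivAt (mellin fun y => Li s (Real.exp (-(x * y))))
      (Complex.Gamma t / (x : ℂ) ^ t *
        (riemannZeta (t + s) * (cdigamma t - Real.log x) + deriv riemannZeta (t + s))) t := by
  have hts : t + s ≠ 1 := fun h => by
    have hre := congrArg Complex.re h
    rw [Complex.add_re, Complex.one_re] at hre
    linarith [(le_max_right _ _).trans_lt ht]
  have hx₀ : (x : ℂ) ≠ 0 := Complex.ofReal_ne_zero.2 hx.ne'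
  have hxt : (x : ℂ) ^ t ≠ 0 := by simp [Complex.cpow_eq_zero_iff, hx₀]
  have hΓ := hasDerivAt_Gamma_of_re_pos ((le_max_left _ _).trans_lt ht)
  have hζ : HasDerivAt (fun z => riemannZeta (z + s)) (deriv riemannZeta (t + s)) t :=
    (differentiableAt_riemannZeta hts).hasDerivAt.comp_add_const t s
  have hpow : HasDerivAt (fun z : ℂ => (x : ℂ) ^ z) ((x : ℂ) ^ t * Real.log x) t := by
    rw [Complex.ofReal_log hx.le]
    exact (Complex.hasStrictDerivAt_const_cpow (Or.inl hx₀)).hasDerivAt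
  have hformula : mellin (fun y => Li s (Real.exp (-(x * y)))) =ᶠ[nhds t]
      fun z => Complex.Gamma z * riemannZeta (z + s) / (x : ℂ) ^ z := by
    filter_upwards [Complex.continuous_re.continuousAt.eventually (lt_mem_nhds ht)] with z hz
    exact (hasMellin_Li_exp s hx hz).2
  refine ((hΓ.mul hζ).div hpow hxt |>.congr_of_eventuallyEq hformula).congr_deriv ?_
  simp only [Pi.mul_apply]
  field_simp
  ring

theorem hasMellin_sub_log_smul_Li_exp (c s : ℂ) (hx : 0 < x) (ht : max 0 (1 - s.re) < t.re) :
    HasMellin (fun y => (c - Real.log y) • Li s (Real.exp (-(x * y)))) t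
      (Complex.Gamma t / (x : ℂ) ^ t *
        (riemannZeta (t + s) * (c - cdigamma t + Real.log x) - deriv riemannZeta (t + s))) := by
  have hconst := hasMellin_const_smul_of_hasMellin c (hasMellin_Li_exp s hx ht)
  have hlog := (hasExpSeries_Li_exp s hx).hasMellin_log_smul ht (hasDerivAt_mellin_Li_exp s hx ht)
  convert hasMellin_sub_of_hasMellin hconst hlog using 1
  · simp only [sub_smul, Complex.coe_smul]
  · rw [smul_eq_mul]
    ring

theorem hasMellin_Li_exp_mul_Li_exp (r s : ℂ) (hx : 0 < x)
    (ht : max 0 (1 - r.re) + max 0 (1 - s.re) < t.re) :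
    HasMellin (fun y => Li r (Real.exp (-y)) * Li s (Real.exp (-(x * y)))) t
      (Complex.Gamma t * Theta r s t x) := by
  have hprod := (hasExpSeries_Li_exp r one_pos).mul (hasExpSeries_Li_exp s hx)
  have hsum : Summable fun i : ℕ × ℕ =>
      1 / ((i.1 + 1 : ℕ) : ℂ) ^ r * (1 / ((i.2 + 1 : ℕ) : ℂ) ^ s) /
        ((((i.1 + 1 : ℕ) : ℝ) * 1 + ((i.2 + 1 : ℕ) : ℝ) * x : ℝ) : ℂ) ^ t := by
    refine .of_norm ((hprod.summable_norm_div_rpow ht).congr fun i => ?_)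
    rw [norm_div, Complex.norm_cpow_eq_rpow_re_of_pos (hprod.exponent_pos i)]
  convert hprod.hasMellin ht using 1
  · simp only [one_mul]
  · rw [hsum.tsum_prod, Theta]
    push_cast
    simp only [mul_one, div_eq_mul_inv, mul_inv, one_mul]

theorem hasMellin_Li_exp_mul_sub_log_sub_sum (r s c h : ℂ) (q : ℕ) (d : ℕ → ℂ) (K : Finset ℕ)
    (hx : 0 < x) (ht : max 0 (1 - r.re) + max 0 (1 - s.re) < t.re) :
    HasMellin (fun y => Li s (Real.exp (-(x * y))) *
        (Li r (Real.exp (-y)) - c * (h - Real.log y) * (y : ℂ) ^ q - ∑ k ∈ K, d k * (y : ℂ) ^ k)) t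
      (Complex.Gamma t * Theta r s t x
        - c * (Complex.Gamma (t + q) / (x : ℂ) ^ (t + q) *
            (riemannZeta (t + q + s) * (h - cdigamma (t + q) + Real.log x)
              - deriv riemannZeta (t + q + s)))
        - ∑ k ∈ K, d k *
            (Complex.Gamma (t + k) * riemannZeta (t + k + s) / (x : ℂ) ^ (t + k))) := by
  have htk (k : ℕ) : max 0 (1 - s.re) < (t + k).re := by
    rw [Complex.add_re, Complex.natCast_re]
    linarith [le_max_left 0 (1 - r.re), (Nat.cast_nonneg k : (0 : ℝ) ≤ k)]
  have hprod := hasMellin_Li_exp_mul_Li_exp r s hx ht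
  have hlog := hasMellin_const_smul_of_hasMellin c <| hasMellin_pow_smul_of_hasMellin <|
    hasMellin_sub_log_smul_Li_exp h s hx (htk q)
  have hpoly := hasMellin_finset_sum K fun k _ => hasMellin_const_smul_of_hasMellin (d k) <|
    hasMellin_pow_smul_of_hasMellin <| hasMellin_Li_exp s hx (htk k)
  convert hasMellin_sub_of_hasMellin (hasMellin_sub_of_hasMellin hprod hlog) hpoly using 1
  · funext y
    simp only [smul_eq_mul, mul_sub _ _ (K.sum _), Finset.mul_sum]
    congr 1
    · ring
    · exact Finset.sum_congr rfl fun _ _ => by ring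
  · simp only [smul_eq_mul]

end Polylogarithm

theorem statement1_general (x : ℝ) (hx : 0 < x) (r : ℕ) (hr : 1 ≤ r) (s t : ℂ)
    (ht : max 0 (1 - s.re) < t.re) (K : Finset ℕ) :
    HasMellin (fun y => Li s (Real.exp (-(x * y))) *
        (Li (r : ℂ) (Real.exp (-y))
          - (-1 : ℂ) ^ (r - 1) * (((harmonic (r - 1) : ℚ) : ℂ) - (Real.log y : ℂ)) *
              (y : ℂ) ^ ((r : ℂ) - 1) / (Nat.factorial (r - 1) : ℂ)
          - ∑ k ∈ K, (-1) ^ k * riemannZeta ((r : ℂ) - (k : ℕ)) * (y : ℂ) ^ (k : ℕ) /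
              (Nat.factorial k : ℂ))) t
      (Complex.Gamma t * (Theta (r : ℂ) s t x
        - ∑ k ∈ K, ((-1) ^ k / (Nat.factorial k : ℂ)) * riemannZeta ((r : ℂ) - (k : ℕ)) *
            Complex.Gamma (t + (k : ℕ)) * riemannZeta (t + (k : ℕ) + s) /
            ((x : ℂ) ^ (t + (k : ℕ)) * Complex.Gamma t)
        + ((-1 : ℂ) ^ r * Complex.Gamma (t + r - 1) /
            ((x : ℂ) ^ (t + (r : ℂ) - 1) * (Nat.factorial (r - 1) : ℂ) * Complex.Gamma t)) *
          (riemannZeta (t + s + r - 1) *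
              (((harmonic (r - 1) : ℚ) : ℂ) - cdigamma (t + (r : ℂ) - 1) + (Real.log x : ℂ))
            - deriv riemannZeta (t + s + r - 1)))) := by
  obtain ⟨q, rfl⟩ : ∃ q, r = q + 1 := ⟨r - 1, by omega⟩
  have hΓ : Complex.Gamma t ≠ 0 :=
    Complex.Gamma_ne_zero_of_re_pos ((le_max_left _ _).trans_lt ht)
  have hq : t + ((q + 1 : ℕ) : ℂ) - 1 = t + q := by push_cast; ring
  have hqs : t + s + ((q + 1 : ℕ) : ℂ) - 1 = t + q + s := by push_cast; ring
  convert hasMellin_Li_exp_mul_sub_log_sub_sum (t := t) ((q + 1 : ℕ) : ℂ) s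
    ((-1) ^ q / (Nat.factorial q : ℂ)) (harmonic q : ℚ) q
    (fun k => (-1) ^ k / (Nat.factorial k : ℂ) * riemannZeta (((q + 1 : ℕ) : ℂ) - (k : ℕ))) K hx
    (by simpa using ht) using 1
  · simp only [Nat.cast_succ, add_sub_cancel_right, Nat.add_sub_cancel, Complex.cpow_natCast,
      div_mul_eq_mul_div]
  · rw [hq, hqs, Nat.add_sub_cancel, sub_add_eq_add_sub, mul_sub, mul_add, Finset.mul_sum]
    congr 1
    · have hxq : (x : ℂ) ^ (t + q) ≠ 0 := by
        simp [Complex.cpow_eq_zero_iff, hx.ne']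
      field_simp
      ring
    · exact Finset.sum_congr rfl fun _ _ => by field_simp

theorem statement1 (x : ℝ) (hx : 0 < x) (r : ℕ) (hr : 1 ≤ r) (s t : ℂ)
    (ht : max (max 0 (1 - (r : ℝ))) (max (1 - s.re) (2 - (r : ℝ) - s.re)) < t.re)
    (M : ℕ) (hM : r - 1 ≤ M) :
    (1 / Complex.Gamma t) * ∫ y in Set.Ioi (0 : ℝ),
        (y : ℂ) ^ (t - 1) * Li s (Real.exp (-(x * y))) *
          (Li (r : ℂ) (Real.exp (-y))
            - (-1 : ℂ) ^ (r - 1) * (((harmonic (r - 1) : ℚ) : ℂ) - (Real.log y : ℂ)) *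
                (y : ℂ) ^ ((r : ℂ) - 1) / (Nat.factorial (r - 1) : ℂ)
            - ∑ k ∈ Finset.range (M + 1) \ {r - 1},
                (-1) ^ k * riemannZeta ((r : ℂ) - (k : ℕ)) * (y : ℂ) ^ (k : ℕ) /
                  (Nat.factorial k : ℂ)) =
      Theta (r : ℂ) s t x
      - ∑ k ∈ Finset.range (M + 1) \ {r - 1},
          ((-1) ^ k / (Nat.factorial k : ℂ)) * riemannZeta ((r : ℂ) - (k : ℕ)) *
            Complex.Gamma (t + (k : ℕ)) * riemannZeta (t + (k : ℕ) + s) /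
            ((x : ℂ) ^ (t + (k : ℕ)) * Complex.Gamma t)
      + ((-1 : ℂ) ^ r * Complex.Gamma (t + r - 1) /
            ((x : ℂ) ^ (t + (r : ℂ) - 1) * (Nat.factorial (r - 1) : ℂ) * Complex.Gamma t)) *
          (riemannZeta (t + s + r - 1) *
              (((harmonic (r - 1) : ℚ) : ℂ) - cdigamma (t + (r : ℂ) - 1) + (Real.log x : ℂ))
            - deriv riemannZeta (t + s + r - 1)) := by
  have hst : max 0 (1 - s.re) < t.re :=
    (max_le_max (le_max_left _ _) (le_max_left _ _)).trans_lt ht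
  rw [one_div, inv_mul_eq_iff_eq_mul₀
    (Complex.Gamma_ne_zero_of_re_pos ((le_max_left _ _).trans_lt hst))]
  simpa only [mellin, smul_eq_mul, mul_assoc] using
    (statement1_general x hx r hr s t hst (Finset.range (M + 1) \ {r - 1})).2
end

section
/- Let r, t ∈ ℕ∪{0} with r+t ≥ 2, let x>0, and let s ∈ ℂ with Re(s) > 2−r−t and Re(s+t) > 1. Then Θ(r,s,t,x) = ∑_{i=0}^{r−2} ((−1)^i / x^{t+i}) C(i+t−1, i) ζ(s+t+i) ζ(r−i) − ((−1)^r / x^{r+t−1}) C(r+t−2, t−1) ∑_{m=1}^∞ ( γ + ψ(mx+1) ) / m^{r+s+t−1} + (−1)^r ∑_{j=0}^{t−2} C(j+r−1, j) ( (−1)^{t−j} / (t−j−1)! ) (1/x^{j+r}) ∑_{m=1}^∞ ψ^{(t−j−1)}(mx+1) / m^{r+s+j}, where all series converge absolutely. -/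
/-!
For fixed `m`, expand `1 / (n ^ r * (n + m x) ^ t)` into partial fractions in `n`. Summed over `n`,
the poles of order at least two give zeta values (at `n = 0`) and polygamma values (at `n = -m x`).
The two simple poles have opposite residues, so `1 / n` and `1 / (n + m x)` only occur through their
difference, which sums to `γ + ψ(m x + 1)`. Absolute convergence of the double series lets one sum
over `n` first. It also gives that of the digamma and polygamma series: up to constant factors they
are what summing over `n` leaves of `Θ(1, w - 1, 1, x)` and `Θ(0, w, k + 1, x)`.
-/

open Complex Filter Set

/-- Binomial coefficient `C(a,b)` for integer arguments, with the conventions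
`C(-1,0) = 1`, `C(c,-1) = 0` for `c ≠ -1`, and `C(-1,-1) = 1`. -/
def binomC (a b : ℤ) : ℤ :=
  if a = -1 ∧ (b = 0 ∨ b = -1) then 1
  else if b < 0 ∨ a < 0 then 0
  else (a.toNat.choose b.toNat : ℤ)

/-- The digamma function `ψ(y) = -γ + ∑_{n=0}^∞ (1/(n+1) - 1/(n+y))` (for `y > 0`),
so that `γ + ψ(y+1) = ∑_{n=1}^∞ (1/n - 1/(n+y))`. -/
noncomputable def psi (y : ℝ) : ℝ :=
  -Real.eulerMascheroniConstant + ∑' n : ℕ, (1 / ((n : ℝ) + 1) - 1 / ((n : ℝ) + y))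

/-- The `k`-th polygamma function `ψ^{(k)}(y) = (-1)^{k+1} k! ∑_{n=0}^∞ (n+y)^{-(k+1)}`
(for `k ≥ 1` and `y > 0`), so that `ψ^{(k)}(y+1) = (-1)^{k+1} k! ∑_{n=1}^∞ (n+y)^{-(k+1)}`. -/
noncomputable def polygamma (k : ℕ) (y : ℝ) : ℝ :=
  (-1 : ℝ) ^ (k + 1) * (Nat.factorial k) * ∑' n : ℕ, ((n : ℝ) + y) ^ (-((k : ℤ) + 1))

section Binomial

lemma binomC_symm (a b : ℤ) : binomC a (a - b) = binomC a b := by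
  rcases lt_trichotomy a (-1) with ha | rfl | ha
  · rw [binomC, binomC, if_neg (by omega), if_pos (by omega), if_neg (by omega), if_pos (by omega)]
  · simp only [binomC]
    grind
  · lift a to ℕ using by omega
    have binomC_of_lt {c : ℤ} (hc : a < c) : binomC a c = 0 := by
      lift c to ℕ using by omega
      simp [binomC, Nat.choose_eq_zero_of_lt (Nat.cast_lt.mp hc)]
    have binomC_of_neg {c : ℤ} (hc : c < 0) : binomC a c = 0 := by
      rw [binomC, if_neg (by omega), if_pos (by omega)]
    rcases lt_or_ge b 0 with hb | hb
    · rw [binomC_of_neg hb, binomC_of_lt (by omega)]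
    rcases lt_or_ge (a : ℤ) b with hab | hab
    · rw [binomC_of_lt hab, binomC_of_neg (by omega)]
    lift b to ℕ using hb
    rw [← Nat.cast_sub (by omega)]
    have binomC_natCast (c : ℕ) : binomC a c = a.choose c := by
      rw [binomC, if_neg (by omega), if_neg (by omega), Int.toNat_natCast, Int.toNat_natCast]
    rw [binomC_natCast, binomC_natCast, Nat.choose_symm (Nat.cast_le.mp hab)]

lemma binomC_add_sub_one (t i : ℕ) : binomC ((i : ℤ) + t - 1) i = Nat.multichoose t i := by
  rcases Nat.eq_zero_or_pos (i + t) with h | h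
  · obtain ⟨rfl, rfl⟩ : i = 0 ∧ t = 0 := by omega
    simp [binomC]
  · rw [binomC, if_neg (by omega), if_neg (by omega), Nat.multichoose_eq]
    congr 2
    omega

end Binomial

section PartialFractions

variable {K : Type*} [Field K]

/-- The principal part at `u = 0` of the partial fraction expansion of
`1 / (u ^ r * (u + a) ^ t)`. -/
def principalPart (r t : ℕ) (u a : K) : K :=
  ∑ i ∈ Finset.range r, (-1) ^ i / a ^ (t + i) * (Nat.multichoose t i : K) * (1 / u ^ (r - i))

lemma principalPart_zero_left (t : ℕ) (u a : K) : principalPart 0 t u a = 0 := by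
  simp [principalPart]

lemma principalPart_succ_zero (r : ℕ) (u a : K) :
    principalPart (r + 1) 0 u a = 1 / u ^ (r + 1) := by
  simp [principalPart, Finset.sum_range_succ']

lemma principalPart_succ_succ (r t : ℕ) (u : K) {a : K} (ha : a ≠ 0) :
    principalPart (r + 1) (t + 1) u a =
      (principalPart (r + 1) t u a - principalPart r (t + 1) u a) / a := by
  simp only [principalPart, Finset.sum_range_succ' _ r]
  rw [eq_div_iff ha, add_mul, Finset.sum_mul, add_sub_right_comm, ← Finset.sum_sub_distrib]
  congr 1
  · refine Finset.sum_congr rfl fun i _ => ?_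
    rw [Nat.multichoose_succ_succ, Nat.add_sub_add_right]
    push_cast
    field_simp
    ring
  · simp only [Nat.multichoose_zero_right]
    field_simp
    ring

lemma one_div_pow_mul_pow_eq_principalPart_add {u v : K} (hu : u ≠ 0) (hv : v ≠ 0) (huv : u ≠ v) :
    ∀ r t : ℕ, 0 < r + t →
      1 / (u ^ r * v ^ t) = principalPart r t u (v - u) + principalPart t r v (u - v)
  | 0, 0, h => absurd h (lt_irrefl _)
  | r + 1, 0, _ => by simp [principalPart_succ_zero, principalPart_zero_left]
  | 0, t + 1, _ => by simp [principalPart_succ_zero, principalPart_zero_left]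
  | r + 1, t + 1, _ => by
    have hvu : v - u ≠ 0 := sub_ne_zero.mpr huv.symm
    have hrec : 1 / (u ^ (r + 1) * v ^ (t + 1)) =
        (1 / (u ^ (r + 1) * v ^ t) - 1 / (u ^ r * v ^ (t + 1))) / (v - u) := by
      field_simp
      ring
    rw [hrec, one_div_pow_mul_pow_eq_principalPart_add hu hv huv (r + 1) t (by omega),
      one_div_pow_mul_pow_eq_principalPart_add hu hv huv r (t + 1) (by omega),
      principalPart_succ_succ r t u hvu, principalPart_succ_succ t r v (sub_ne_zero.mpr huv),
      ← neg_sub v u]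
    field_simp
    ring
termination_by r t => r + t

lemma principalPart_eq_sub_simplePole {r t : ℕ} (hrt : 2 ≤ r + t) (u a : K) :
    principalPart r t u a =
      ∑ i ∈ Finset.range (r - 1),
          (-1) ^ i / a ^ (t + i) * (Nat.multichoose t i : K) * (1 / u ^ (r - i))
        - (-1) ^ r / a ^ (r + t - 1) * (binomC ((r : ℤ) + t - 2) (t - 1) : K) * (1 / u) := by
  rcases r with _ | r
  · have hresidue : binomC (((0 : ℕ) : ℤ) + t - 2) (t - 1) = 0 := by
      rw [← binomC_symm, binomC, if_neg (by omega), if_pos (by omega)]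
    rw [principalPart_zero_left, hresidue]
    simp
  · have hresidue : binomC (((r + 1 : ℕ) : ℤ) + t - 2) (t - 1) = Nat.multichoose t r := by
      rw [← binomC_add_sub_one, ← binomC_symm]
      congr 1 <;> push_cast <;> ring
    rw [principalPart, Finset.sum_range_succ, hresidue, Nat.add_sub_cancel,
      Nat.add_sub_cancel_left, pow_one, show r + 1 + t - 1 = t + r by omega, Int.cast_natCast]
    ring

lemma neg_one_pow_div_neg_pow {p q k : ℕ} (h : Even (p + q + k)) (a : K) :
    (-1) ^ p / (-a) ^ k = (-1) ^ q / a ^ k := by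
  have hsign : (-1 : K) ^ q * (-1) ^ k = (-1) ^ p := by
    rw [← pow_add]
    exact neg_one_pow_congr (by grind)
  rw [neg_pow a, ← hsign, mul_comm, mul_div_mul_left _ _ (by simp)]

lemma principalPart_neg_eq_add_simplePole {r t : ℕ} (hrt : 2 ≤ r + t) (v a : K) :
    principalPart t r v (-a) =
      (-1) ^ r * ∑ j ∈ Finset.range (t - 1),
          (Nat.multichoose r j : K) * (1 / a ^ (j + r)) * (1 / v ^ (t - j))
        + (-1) ^ r / a ^ (r + t - 1) * (binomC ((r : ℤ) + t - 2) (t - 1) : K) * (1 / v) := by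
  have hresidue : binomC ((t : ℤ) + r - 2) (r - 1) = binomC ((r : ℤ) + t - 2) (t - 1) := by
    rw [← binomC_symm]
    congr 1 <;> ring
  have hpole : (-1 : K) ^ t / (-a) ^ (t + r - 1) = -((-1) ^ r / a ^ (r + t - 1)) := by
    rw [neg_one_pow_div_neg_pow (q := r + 1) (by grind), pow_succ, add_comm t r]
    ring
  rw [principalPart_eq_sub_simplePole (by omega), hresidue, hpole, Finset.mul_sum, neg_mul, neg_mul,
    sub_neg_eq_add]
  refine congrArg (· + _) (Finset.sum_congr rfl fun j _ => ?_)
  rw [neg_one_pow_div_neg_pow (q := r) (by grind), add_comm r j]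
  ring

lemma one_div_pow_mul_add_pow {r t : ℕ} (hrt : 2 ≤ r + t) {u a : K} (hu : u ≠ 0) (ha : a ≠ 0)
    (hua : u + a ≠ 0) :
    1 / (u ^ r * (u + a) ^ t) =
      ∑ i ∈ Finset.range (r - 1),
          (-1) ^ i / a ^ (t + i) * (Nat.multichoose t i : K) * (1 / u ^ (r - i))
        - (-1) ^ r / a ^ (r + t - 1) * (binomC ((r : ℤ) + t - 2) (t - 1) : K) *
          (1 / u - 1 / (u + a))
        + (-1) ^ r * ∑ j ∈ Finset.range (t - 1),
          (Nat.multichoose r j : K) * (1 / a ^ (j + r)) * (1 / (u + a) ^ (t - j)) := by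
  rw [one_div_pow_mul_pow_eq_principalPart_add hu hua (by simpa using ha) r t (by omega),
    add_sub_cancel_left, sub_add_cancel_left, principalPart_eq_sub_simplePole hrt,
    principalPart_neg_eq_add_simplePole hrt]
  ring

end PartialFractions

section SingleSeries

lemma summable_one_div_nat_add_one_rpow {a : ℝ} (ha : 1 < a) :
    Summable fun n : ℕ => 1 / ((n : ℝ) + 1) ^ a :=
  ((Real.summable_one_div_nat_add_rpow 1 a).mpr ha).congr fun n => by
    rw [abs_of_pos n.cast_add_one_pos]

lemma hasSum_one_div_nat_add_one_cpow {w : ℂ} (hw : 1 < w.re) :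
    HasSum (fun n : ℕ => 1 / ((n + 1 : ℕ) : ℂ) ^ w) (riemannZeta w) := by
  have hsum : Summable fun n : ℕ => 1 / ((n + 1 : ℕ) : ℂ) ^ w :=
    (summable_nat_add_iff 1).mpr (Complex.summable_one_div_nat_cpow.mpr hw)
  simpa [zeta_eq_tsum_one_div_nat_add_one_cpow hw] using hsum.hasSum

lemma hasSum_one_div_nat_add_one_pow {k : ℕ} (hk : 2 ≤ k) :
    HasSum (fun n : ℕ => 1 / ((n : ℂ) + 1) ^ k) (riemannZeta k) := by
  simpa using hasSum_one_div_nat_add_one_cpow (w := k) (by simpa using Nat.lt_of_succ_le hk)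

lemma summable_one_div_nat_add_pow {k : ℕ} (hk : 2 ≤ k) (a : ℝ) :
    Summable fun n : ℕ => 1 / ((n : ℝ) + a) ^ k := by
  have hk' : (1 : ℝ) < k := by exact_mod_cast hk
  refine ((Real.summable_one_div_nat_add_rpow a k).mpr hk').of_norm_bounded fun n => ?_
  simp

lemma summable_one_div_sub_one_div_nat_add {y : ℝ} (hy : 0 < y) :
    Summable fun n : ℕ => 1 / ((n : ℝ) + 1) - 1 / ((n : ℝ) + y) := by
  have hbound := ((summable_one_div_nat_add_pow le_rfl 1).add
    (summable_one_div_nat_add_pow le_rfl y)).mul_left |y - 1|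
  refine hbound.of_norm_bounded fun n => ?_
  have hfactor : 1 / ((n : ℝ) + 1) - 1 / (n + y) = (y - 1) * (1 / (n + 1) * (1 / (n + y))) := by
    field_simp
    ring
  rw [hfactor, norm_mul, Real.norm_eq_abs, Real.norm_of_nonneg (by positivity)]
  gcongr
  rw [← one_div_pow, ← one_div_pow]
  nlinarith [two_mul_le_add_sq (1 / ((n : ℝ) + 1)) (1 / (n + y)),
    sq_nonneg (1 / ((n : ℝ) + 1)), sq_nonneg (1 / ((n : ℝ) + y))]

lemma hasSum_gamma_add_psi {a : ℝ} (ha : -1 < a) :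
    HasSum (fun n : ℕ => 1 / ((n : ℂ) + 1) - 1 / ((n : ℂ) + 1 + a))
      ((Real.eulerMascheroniConstant + psi (a + 1) : ℝ) : ℂ) := by
  rw [psi, add_neg_cancel_left]
  have hsum := (summable_one_div_sub_one_div_nat_add (y := a + 1) (by linarith)).hasSum
  simpa [add_assoc, add_comm (1 : ℂ)] using Complex.hasSum_ofReal.mpr hsum

lemma hasSum_polygamma {k : ℕ} (hk : 2 ≤ k) (a : ℝ) :
    HasSum (fun n : ℕ => 1 / ((n : ℂ) + 1 + a) ^ k)
      ((-1) ^ k / ((k - 1).factorial : ℂ) * (polygamma (k - 1) (a + 1) : ℂ)) := by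
  obtain ⟨k, rfl⟩ : ∃ l, k = l + 1 := ⟨k - 1, by omega⟩
  have hterm (n : ℕ) : ((n : ℝ) + (a + 1)) ^ (-((k : ℤ) + 1)) = 1 / (n + (a + 1)) ^ (k + 1) := by
    rw [zpow_neg, one_div]
    norm_cast
  have hvalue : ((-1) ^ (k + 1) / (k.factorial : ℝ) * polygamma k (a + 1)) =
      ∑' n : ℕ, 1 / ((n : ℝ) + (a + 1)) ^ (k + 1) := by
    have hsign : (-1 : ℝ) ^ (k + 1) * (-1) ^ (k + 1) = 1 := by rw [← mul_pow]; simp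
    rw [polygamma, tsum_congr hterm, ← mul_assoc, div_mul_eq_mul_div, ← mul_assoc, hsign, one_mul,
      div_self (by positivity), one_mul]
  have hsum := (summable_one_div_nat_add_pow hk (a + 1)).hasSum
  rw [← hvalue] at hsum
  simpa [add_assoc, add_comm (1 : ℂ)] using Complex.hasSum_ofReal.mpr hsum

lemma hasSum_one_div_pow_mul_add_pow {r t : ℕ} (hrt : 2 ≤ r + t) {a : ℝ} (ha : -1 < a)
    (ha₀ : a ≠ 0) :
    HasSum (fun n : ℕ => 1 / (((n : ℂ) + 1) ^ r * ((n : ℂ) + 1 + a) ^ t))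
      (∑ i ∈ Finset.range (r - 1),
          (-1) ^ i / (a : ℂ) ^ (t + i) * (Nat.multichoose t i : ℂ) * riemannZeta ((r : ℂ) - i)
        - (-1) ^ r / (a : ℂ) ^ (r + t - 1) * (binomC ((r : ℤ) + t - 2) (t - 1) : ℂ) *
          ((Real.eulerMascheroniConstant + psi (a + 1) : ℝ) : ℂ)
        + (-1) ^ r * ∑ j ∈ Finset.range (t - 1),
          (Nat.multichoose r j : ℂ) * (1 / (a : ℂ) ^ (j + r)) *
            ((-1) ^ (t - j) / ((t - j - 1).factorial : ℂ) *
              (polygamma (t - j - 1) (a + 1) : ℂ))) := by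
  have hzeta (i : ℕ) (hi : i ∈ Finset.range (r - 1)) :
      HasSum (fun n : ℕ => 1 / ((n : ℂ) + 1) ^ (r - i)) (riemannZeta ((r : ℂ) - i)) := by
    rw [Finset.mem_range] at hi
    rw [← Nat.cast_sub (by omega)]
    exact hasSum_one_div_nat_add_one_pow (by omega)
  have hpoly (j : ℕ) (hj : j ∈ Finset.range (t - 1)) :=
    hasSum_polygamma (k := t - j) (by rw [Finset.mem_range] at hj; omega) a
  have hne (n : ℕ) : (n : ℂ) + 1 + a ≠ 0 := by
    have : (n : ℝ) + 1 + a ≠ 0 := by linarith [n.cast_nonneg (α := ℝ)]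
    exact_mod_cast this
  refine (((hasSum_sum fun i hi => (hzeta i hi).mul_left _).sub
    ((hasSum_gamma_add_psi ha).mul_left _)).add
    ((hasSum_sum fun j hj => (hpoly j hj).mul_left _).mul_left _)).congr_fun fun n => ?_
  exact one_div_pow_mul_add_pow hrt n.cast_add_one_ne_zero (ofReal_ne_zero.mpr ha₀) (hne n)

end SingleSeries

section DoubleSeries

lemma min_one_rpow_mul_rpow_mul_rpow_le {x u v N M : ℝ} (hx : 0 < x) (hu : 0 ≤ u) (hv : 0 ≤ v)
    (hN : 0 < N) (hM : 0 < M) :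
    (min 1 x) ^ (u + v) * (N ^ u * M ^ v) ≤ (N + M * x) ^ (u + v) := by
  have hc : 0 < min 1 x := lt_min one_pos hx
  have hMx : 0 < M * x := mul_pos hM hx
  have hN_le : min 1 x * N ≤ N + M * x := by
    nlinarith [mul_le_mul_of_nonneg_right (min_le_left 1 x) hN.le]
  have hM_le : min 1 x * M ≤ N + M * x := by
    nlinarith [mul_le_mul_of_nonneg_right (min_le_right 1 x) hM.le]
  calc (min 1 x) ^ (u + v) * (N ^ u * M ^ v) = (min 1 x * N) ^ u * (min 1 x * M) ^ v := by
        rw [Real.mul_rpow hc.le hN.le, Real.mul_rpow hc.le hM.le, Real.rpow_add hc]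
        ring
    _ ≤ (N + M * x) ^ u * (N + M * x) ^ v := by gcongr
    _ = (N + M * x) ^ (u + v) := (Real.rpow_add (by positivity) u v).symm

lemma one_add_rpow_mul_rpow_mul_rpow_le {x τ N M : ℝ} (hx : 0 < x) (hτ : τ ≤ 0) (hN : 1 ≤ N)
    (hM : 1 ≤ M) : (1 + x) ^ τ * (N ^ τ * M ^ τ) ≤ (N + M * x) ^ τ := by
  have hle : N + M * x ≤ (1 + x) * (N * M) := by
    nlinarith [le_mul_of_one_le_right (by linarith : (0 : ℝ) ≤ N) hM,
      mul_le_mul_of_nonneg_right (le_mul_of_one_le_left (by linarith : (0 : ℝ) ≤ M) hN) hx.le]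
  rw [← Real.mul_rpow (by linarith) (by linarith), ← Real.mul_rpow (by linarith) (by positivity)]
  exact Real.rpow_le_rpow_of_nonpos (by positivity) hle hτ

lemma exists_mul_rpow_mul_rpow_le_add_rpow {x ρ σ τ : ℝ} (hx : 0 < x) (hρτ : 1 < ρ + τ)
    (hστ : 1 < σ + τ) (hρστ : 2 < ρ + σ + τ) :
    ∃ u v C : ℝ, 1 < ρ + u ∧ 1 < σ + v ∧ 0 < C ∧
      ∀ N M : ℝ, 1 ≤ N → 1 ≤ M → C * (N ^ u * M ^ v) ≤ (N + M * x) ^ τ := by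
  rcases le_or_gt τ 0 with hτ | hτ
  · exact ⟨τ, τ, (1 + x) ^ τ, hρτ, hστ, by positivity,
      fun N M => one_add_rpow_mul_rpow_mul_rpow_le hx hτ⟩
  · obtain ⟨u, hu, hu'⟩ : ∃ u, max 0 (1 - ρ) < u ∧ u < min τ (σ + τ - 1) :=
      exists_between (max_lt (lt_min hτ (by linarith)) (lt_min (by linarith) (by linarith)))
    rw [max_lt_iff] at hu
    rw [lt_min_iff] at hu'
    refine ⟨u, τ - u, min 1 x ^ τ, by linarith, by linarith, by positivity,
      fun N M hN hM => ?_⟩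
    simpa using min_one_rpow_mul_rpow_mul_rpow_le (v := τ - u) hx hu.1.le (by linarith)
      (by linarith : 0 < N) (by linarith : 0 < M)

lemma summable_one_div_rpow_mul_rpow_mul_add_rpow {x ρ σ τ : ℝ} (hx : 0 < x) (hρτ : 1 < ρ + τ)
    (hστ : 1 < σ + τ) (hρστ : 2 < ρ + σ + τ) :
    Summable fun p : ℕ × ℕ => 1 / (((p.1 : ℝ) + 1) ^ ρ * ((p.2 : ℝ) + 1) ^ σ *
      ((p.1 : ℝ) + 1 + ((p.2 : ℝ) + 1) * x) ^ τ) := by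
  obtain ⟨u, v, C, hu, hv, hC, hle⟩ := exists_mul_rpow_mul_rpow_le_add_rpow hx hρτ hστ hρστ
  refine Summable.of_nonneg_of_le (fun p => by positivity) (fun ⟨n, m⟩ => ?_)
    (((summable_one_div_nat_add_one_rpow hu).mul_of_nonneg (summable_one_div_nat_add_one_rpow hv)
      (fun n => by positivity) (fun m => by positivity)).mul_left (1 / C))
  have hN : (1 : ℝ) ≤ n + 1 := by simp
  have hM : (1 : ℝ) ≤ m + 1 := by simp
  calc 1 / (((n : ℝ) + 1) ^ ρ * ((m : ℝ) + 1) ^ σ * ((n : ℝ) + 1 + ((m : ℝ) + 1) * x) ^ τ)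
      ≤ 1 / (((n : ℝ) + 1) ^ ρ * ((m : ℝ) + 1) ^ σ *
          (C * (((n : ℝ) + 1) ^ u * ((m : ℝ) + 1) ^ v))) := by
        gcongr
        exact hle _ _ hN hM
    _ = 1 / C * (1 / ((n : ℝ) + 1) ^ (ρ + u) * (1 / ((m : ℝ) + 1) ^ (σ + v))) := by
        rw [Real.rpow_add (by positivity), Real.rpow_add (by positivity)]
        field_simp

end DoubleSeries

section MordellTornheim

variable {x : ℝ}

/-- The term of the series `Theta r s t x` at the pair of indices `p`, where both indices start
at `0`. -/
noncomputable def thetaTerm (r s t : ℂ) (x : ℝ) (p : ℕ × ℕ) : ℂ :=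
  1 / (((p.1 + 1 : ℕ) : ℂ) ^ r * ((p.2 + 1 : ℕ) : ℂ) ^ s *
    (((p.1 + 1 : ℕ) : ℂ) + ((p.2 + 1 : ℕ) : ℂ) * (x : ℂ)) ^ t)

/-- The term of the series `∑ (γ + ψ(m x + 1)) / m ^ w`, where the index starts at `0`. -/
noncomputable def digammaTerm (w : ℂ) (x : ℝ) (m : ℕ) : ℂ :=
  ((Real.eulerMascheroniConstant + psi (((m : ℝ) + 1) * x + 1) : ℝ) : ℂ) / ((m + 1 : ℕ) : ℂ) ^ w

/-- The term of the series `∑ ψ^{(k)}(m x + 1) / m ^ w`, where the index starts at `0`. -/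
noncomputable def polygammaTerm (k : ℕ) (w : ℂ) (x : ℝ) (m : ℕ) : ℂ :=
  ((polygamma k (((m : ℝ) + 1) * x + 1) : ℝ) : ℂ) / ((m + 1 : ℕ) : ℂ) ^ w

lemma norm_thetaTerm (hx : 0 < x) (r s t : ℂ) (p : ℕ × ℕ) :
    ‖thetaTerm r s t x p‖ = 1 / (((p.1 : ℝ) + 1) ^ r.re * ((p.2 : ℝ) + 1) ^ s.re *
      ((p.1 : ℝ) + 1 + ((p.2 : ℝ) + 1) * x) ^ t.re) := by
  have hbase : ((p.1 + 1 : ℕ) : ℂ) + ((p.2 + 1 : ℕ) : ℂ) * (x : ℂ) =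
      (((p.1 : ℝ) + 1 + ((p.2 : ℝ) + 1) * x : ℝ) : ℂ) := by
    push_cast
    rfl
  rw [thetaTerm, hbase, norm_div, norm_mul, norm_mul, norm_one,
    norm_natCast_cpow_of_pos p.1.succ_pos, norm_natCast_cpow_of_pos p.2.succ_pos,
    norm_cpow_eq_rpow_re_of_pos (by positivity), Nat.cast_succ, Nat.cast_succ]

lemma summable_norm_thetaTerm (hx : 0 < x) {r s t : ℂ} (hrt : 1 < (r + t).re)
    (hst : 1 < (s + t).re) (hrst : 2 < (r + s + t).re) :
    Summable fun p => ‖thetaTerm r s t x p‖ := by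
  simp only [norm_thetaTerm hx]
  exact summable_one_div_rpow_mul_rpow_mul_add_rpow hx hrt hst hrst

lemma Theta_eq_tsum_tsum_swap (hx : 0 < x) {r s t : ℂ} (hrt : 1 < (r + t).re)
    (hst : 1 < (s + t).re) (hrst : 2 < (r + s + t).re) :
    Theta r s t x = ∑' m : ℕ, ∑' n : ℕ, thetaTerm r s t x (n, m) :=
  (Summable.tsum_comm (f := fun n m => thetaTerm r s t x (n, m))
    (summable_norm_thetaTerm hx hrt hst hrst).of_norm).symm

lemma summable_norm_tsum_thetaTerm (hx : 0 < x) {r s t : ℂ} (hrt : 1 < (r + t).re)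
    (hst : 1 < (s + t).re) (hrst : 2 < (r + s + t).re) :
    Summable fun m : ℕ => ‖∑' n : ℕ, thetaTerm r s t x (n, m)‖ :=
  (summable_norm_thetaTerm hx hrt hst hrst).of_norm.prod_symm.prod.norm

lemma thetaTerm_natCast (r : ℕ) (s : ℂ) (t : ℕ) (x : ℝ) (n m : ℕ) :
    thetaTerm r s t x (n, m) = 1 / ((m + 1 : ℕ) : ℂ) ^ s *
      (1 / (((n : ℂ) + 1) ^ r * ((n : ℂ) + 1 + (((m : ℝ) + 1) * x : ℝ)) ^ t)) := by
  simp only [thetaTerm, cpow_natCast]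
  push_cast
  ring

lemma natCast_succ_cpow_add_natCast (m : ℕ) (s : ℂ) (k : ℕ) :
    ((m + 1 : ℕ) : ℂ) ^ (s + k) = ((m + 1 : ℕ) : ℂ) ^ s * ((m + 1 : ℕ) : ℂ) ^ k := by
  rw [cpow_add _ _ (Nat.cast_ne_zero.mpr m.succ_ne_zero), cpow_natCast]

lemma hasSum_thetaTerm (hx : 0 < x) {r t : ℕ} (hrt : 2 ≤ r + t) (s : ℂ) (m : ℕ) :
    HasSum (fun n : ℕ => thetaTerm r s t x (n, m))
      (∑ i ∈ Finset.range (r - 1), (-1) ^ i / (x : ℂ) ^ (t + i) * (Nat.multichoose t i : ℂ) *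
          (1 / ((m + 1 : ℕ) : ℂ) ^ (s + t + i)) * riemannZeta ((r : ℂ) - i)
        - (-1) ^ r / (x : ℂ) ^ (r + t - 1) * (binomC ((r : ℤ) + t - 2) (t - 1) : ℂ) *
          digammaTerm (r + s + t - 1) x m
        + (-1) ^ r * ∑ j ∈ Finset.range (t - 1), (Nat.multichoose r j : ℂ) *
          ((-1) ^ (t - j) / ((t - j - 1).factorial : ℂ)) * (1 / (x : ℂ) ^ (j + r)) *
            polygammaTerm (t - j - 1) (r + s + j) x m) := by
  have ha : 0 < ((m : ℝ) + 1) * x := by positivity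
  have hcast : ((((m : ℝ) + 1) * x : ℝ) : ℂ) = ((m + 1 : ℕ) : ℂ) * x := by push_cast; rfl
  have hsum : HasSum (fun n : ℕ => thetaTerm r s t x (n, m)) _ :=
    ((hasSum_one_div_pow_mul_add_pow hrt (by linarith) ha.ne').mul_left
      (1 / ((m + 1 : ℕ) : ℂ) ^ s)).congr_fun fun n => thetaTerm_natCast r s t x n m
  rw [mul_add, mul_sub, mul_left_comm _ ((-1 : ℂ) ^ r), Finset.mul_sum, Finset.mul_sum] at hsum
  have hcpow_zeta (i : ℕ) : ((m + 1 : ℕ) : ℂ) ^ (s + t + i) =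
      ((m + 1 : ℕ) : ℂ) ^ s * ((m + 1 : ℕ) : ℂ) ^ (t + i) := by
    rw [add_assoc, ← Nat.cast_add, natCast_succ_cpow_add_natCast]
  have hcpow_digamma : ((m + 1 : ℕ) : ℂ) ^ (r + s + t - 1) =
      ((m + 1 : ℕ) : ℂ) ^ s * ((m + 1 : ℕ) : ℂ) ^ (r + t - 1) := by
    rw [← natCast_succ_cpow_add_natCast, Nat.cast_sub (by omega)]
    push_cast
    ring_nf
  have hcpow_polygamma (j : ℕ) : ((m + 1 : ℕ) : ℂ) ^ (r + s + j) =
      ((m + 1 : ℕ) : ℂ) ^ s * ((m + 1 : ℕ) : ℂ) ^ (j + r) := by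
    rw [← natCast_succ_cpow_add_natCast]
    push_cast
    ring_nf
  convert hsum using 2
  · simp only [digammaTerm, hcast, hcpow_zeta, hcpow_digamma, mul_pow]
    refine congrArg₂ (· - ·) (Finset.sum_congr rfl fun i _ => ?_) ?_ <;> field_simp
  · simp only [polygammaTerm, hcast, hcpow_polygamma, mul_pow]
    refine congrArg _ (Finset.sum_congr rfl fun j _ => ?_)
    field_simp

lemma tsum_thetaTerm_one_one (hx : 0 < x) (w : ℂ) (m : ℕ) :
    ∑' n : ℕ, thetaTerm 1 (w - 1) 1 x (n, m) = digammaTerm w x m / x := by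
  have hsum := (hasSum_thetaTerm hx (r := 1) (t := 1) le_rfl (w - 1) m).tsum_eq
  have hresidue : binomC 0 0 = 1 := rfl
  simpa [hresidue, div_eq_inv_mul] using hsum

lemma tsum_thetaTerm_zero_succ (hx : 0 < x) {k : ℕ} (hk : 1 ≤ k) (w : ℂ) (m : ℕ) :
    ∑' n : ℕ, thetaTerm 0 w (k + 1) x (n, m) =
      (-1) ^ (k + 1) / (k.factorial : ℂ) * polygammaTerm k w x m := by
  obtain ⟨k, rfl⟩ := Nat.exists_eq_add_of_le' hk
  have hsum := (hasSum_thetaTerm hx (r := 0) (t := k + 1 + 1) (by omega) w m).tsum_eq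
  have hresidue : binomC ((k : ℤ) + 1 + 1 - 2) (k + 1) = 0 := by
    rw [← binomC_symm, binomC, if_neg (by omega), if_pos (by omega)]
  simpa [hresidue, Finset.sum_range_succ'] using hsum

lemma summable_norm_digammaTerm (hx : 0 < x) {w : ℂ} (hw : 1 < w.re) :
    Summable fun m => ‖digammaTerm w x m‖ := by
  have hsum := summable_norm_tsum_thetaTerm hx (r := 1) (s := w - 1) (t := 1)
    (by norm_num) (by simpa using hw) (by simp only [add_re, sub_re, one_re]; linarith)
  simpa [tsum_thetaTerm_one_one hx, div_eq_mul_inv, summable_mul_right_iff, hx.ne'] using hsum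

lemma summable_norm_polygammaTerm (hx : 0 < x) {k : ℕ} (hk : 1 ≤ k) {w : ℂ}
    (hw : 1 < w.re + k) : Summable fun m => ‖polygammaTerm k w x m‖ := by
  have hsum := summable_norm_tsum_thetaTerm hx (r := 0) (s := w) (t := k + 1)
    (by simpa using Nat.lt_of_succ_le hk)
    (by simp only [add_re, natCast_re, one_re]; linarith)
    (by simp only [add_re, natCast_re, one_re, zero_re]; linarith)
  simpa [tsum_thetaTerm_zero_succ hx hk, summable_mul_left_iff, k.factorial_ne_zero] using hsum

end MordellTornheim

theorem statement11 (r t : ℕ) (hrt : 2 ≤ r + t) (x : ℝ) (hx : 0 < x) (s : ℂ)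
    (hs1 : 2 - (r : ℝ) - (t : ℝ) < s.re) (hs2 : 1 < s.re + t) :
    Summable (fun p : ℕ × ℕ =>
      ‖1 / (((p.1 + 1 : ℕ) : ℂ) ^ (r : ℂ) * ((p.2 + 1 : ℕ) : ℂ) ^ s *
        (((p.1 + 1 : ℕ) : ℂ) + ((p.2 + 1 : ℕ) : ℂ) * (x : ℂ)) ^ (t : ℂ))‖) ∧
    Summable (fun m : ℕ =>
      ‖((Real.eulerMascheroniConstant + psi (((m : ℝ) + 1) * x + 1) : ℝ) : ℂ) /
        ((m + 1 : ℕ) : ℂ) ^ ((r : ℂ) + s + (t : ℂ) - 1)‖) ∧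
    (∀ j ∈ Finset.range (t - 1),
      Summable (fun m : ℕ =>
        ‖((polygamma (t - j - 1) (((m : ℝ) + 1) * x + 1) : ℝ) : ℂ) /
          ((m + 1 : ℕ) : ℂ) ^ ((r : ℂ) + s + (j : ℂ))‖)) ∧
    Theta (r : ℂ) s (t : ℂ) x =
      ∑ i ∈ Finset.range (r - 1),
          ((-1 : ℂ) ^ i / (x : ℂ) ^ (t + i)) * ((binomC ((i : ℤ) + t - 1) i : ℤ) : ℂ) *
            riemannZeta (s + (t : ℂ) + (i : ℂ)) * riemannZeta ((r : ℂ) - (i : ℂ))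
      - ((-1 : ℂ) ^ r / (x : ℂ) ^ (r + t - 1)) *
          ((binomC ((r : ℤ) + t - 2) ((t : ℤ) - 1) : ℤ) : ℂ) *
          ∑' m : ℕ, ((Real.eulerMascheroniConstant + psi (((m : ℝ) + 1) * x + 1) : ℝ) : ℂ) /
            ((m + 1 : ℕ) : ℂ) ^ ((r : ℂ) + s + (t : ℂ) - 1)
      + (-1 : ℂ) ^ r * ∑ j ∈ Finset.range (t - 1),
          ((binomC ((j : ℤ) + r - 1) j : ℤ) : ℂ) *
            ((-1 : ℂ) ^ (t - j) / ((t - j - 1).factorial : ℂ)) * (1 / (x : ℂ) ^ (j + r)) *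
            ∑' m : ℕ, ((polygamma (t - j - 1) (((m : ℝ) + 1) * x + 1) : ℝ) : ℂ) /
              ((m + 1 : ℕ) : ℂ) ^ ((r : ℂ) + s + (j : ℂ)) := by
  have hrt' : (2 : ℝ) ≤ r + t := by exact_mod_cast hrt
  have hΘ₁ : 1 < ((r : ℂ) + t).re := by simp only [add_re, natCast_re]; linarith
  have hΘ₂ : 1 < (s + t).re := by simpa using hs2
  have hΘ₃ : 2 < ((r : ℂ) + s + t).re := by simp only [add_re, natCast_re]; linarith
  have hψ : Summable fun m => ‖digammaTerm (r + s + t - 1) x m‖ :=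
    summable_norm_digammaTerm hx (by simp only [add_re, sub_re, natCast_re, one_re]; linarith)
  have hpoly (j : ℕ) (hj : j ∈ Finset.range (t - 1)) :
      Summable fun m => ‖polygammaTerm (t - j - 1) (r + s + j) x m‖ := by
    rw [Finset.mem_range] at hj
    refine summable_norm_polygammaTerm hx (by omega) ?_
    rw [Nat.sub_sub, Nat.cast_sub (by omega), Nat.cast_add]
    simp only [add_re, natCast_re, Nat.cast_one]
    linarith
  have hζ (i : ℕ) := hasSum_one_div_nat_add_one_cpow (w := s + t + i) (by
    simp only [add_re, natCast_re]
    linarith [i.cast_nonneg (α := ℝ)])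
  refine ⟨summable_norm_thetaTerm hx hΘ₁ hΘ₂ hΘ₃, hψ, hpoly, ?_⟩
  simp only [binomC_add_sub_one, Int.cast_natCast]
  rw [Theta_eq_tsum_tsum_swap hx hΘ₁ hΘ₂ hΘ₃,
    tsum_congr fun m => (hasSum_thetaTerm hx hrt s m).tsum_eq]
  exact (((hasSum_sum fun i _ => ((hζ i).mul_left _).mul_right _).sub
    (hψ.of_norm.hasSum.mul_left _)).add ((hasSum_sum fun j hj =>
      (hpoly j hj).of_norm.hasSum.mul_left _).mul_left _)).tsum_eq
end

section
/- For every x>0, the identity −∑_{m=1}^∞ ψ'(mx+1)/m² + ∑_{m=1}^∞ ψ'(m/x+1)/m² + (2/x) ∑_{m=1}^∞ ( γ + ψ(mx+1) )/m³ = ζ(2)² = π⁴/36 holds. -/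
/-!
Summing the partial fraction expansion
`1 / (a² b²) = 2 / (b² a (a + b)) - 1 / (b² (a + b)²) + 1 / (a² (a + b)²)`
over `a = n` and `b = m x` gives `ζ(2)² / x²` on the left. On the right, summing first over the
variable that occurs only in the simple fractions produces, term by term, `γ + ψ(m x + 1)`,
`ψ'(m x + 1)` and `ψ'(n / x + 1)`.
-/

section PartialFractions

theorem one_div_sq_mul_one_div_sq_eq {K : Type*} [Field K] {a b : K} (ha : a ≠ 0) (hb : b ≠ 0)
    (hab : a + b ≠ 0) :
    1 / a ^ 2 * (1 / b ^ 2) =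
      2 * (1 / b ^ 2 * (1 / (a * (a + b)))) - 1 / b ^ 2 * (1 / (a + b) ^ 2)
        + 1 / a ^ 2 * (1 / (a + b) ^ 2) := by
  field_simp
  ring

variable {ι κ : Type*} {a : ι → ℝ} {b : κ → ℝ}

theorem summable_one_div_sq_mul_one_div_sq (ha : Summable fun i => 1 / a i ^ 2)
    (hb : Summable fun k => 1 / b k ^ 2) :
    Summable fun p : ι × κ => 1 / a p.1 ^ 2 * (1 / b p.2 ^ 2) :=
  ha.mul_of_nonneg hb (fun i => one_div_nonneg.mpr (sq_nonneg (a i)))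
    fun k => one_div_nonneg.mpr (sq_nonneg (b k))

theorem summable_one_div_sq_mul_one_div_add_sq (ha₀ : ∀ i, 0 ≤ a i) (hb₀ : ∀ k, 0 < b k)
    (ha : Summable fun i => 1 / a i ^ 2) (hb : Summable fun k => 1 / b k ^ 2) :
    Summable fun p : ι × κ => 1 / a p.1 ^ 2 * (1 / (a p.1 + b p.2) ^ 2) := by
  refine (summable_one_div_sq_mul_one_div_sq ha hb).of_nonneg_of_le
    (fun p => by positivity) fun p => ?_
  have := hb₀ p.2
  gcongr
  exact le_add_of_nonneg_left (ha₀ p.1)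

theorem summable_one_div_sq_mul_one_div_mul_add (ha₀ : ∀ i, 0 < a i) (hb₀ : ∀ k, 0 ≤ b k)
    (ha : Summable fun i => 1 / a i ^ 2) (hb : Summable fun k => 1 / b k ^ 2) :
    Summable fun p : κ × ι => 1 / b p.1 ^ 2 * (1 / (a p.2 * (a p.2 + b p.1))) := by
  refine (summable_one_div_sq_mul_one_div_sq hb ha).of_nonneg_of_le (fun p => ?_) fun p => ?_
  all_goals have := ha₀ p.2; have := hb₀ p.1
  · positivity
  · rw [sq (a p.2)]
    gcongr
    linarith

theorem tsum_one_div_sq_mul_tsum_one_div_sq (ha₀ : ∀ i, 0 < a i) (hb₀ : ∀ k, 0 < b k)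
    (ha : Summable fun i => 1 / a i ^ 2) (hb : Summable fun k => 1 / b k ^ 2) :
    (∑' i, 1 / a i ^ 2) * ∑' k, 1 / b k ^ 2 =
      2 * (∑' k, 1 / b k ^ 2 * ∑' i, 1 / (a i * (a i + b k)))
        - (∑' k, 1 / b k ^ 2 * ∑' i, 1 / (a i + b k) ^ 2)
        + ∑' i, 1 / a i ^ 2 * ∑' k, 1 / (a i + b k) ^ 2 := by
  have hS := summable_one_div_sq_mul_one_div_mul_add ha₀ (fun k => (hb₀ k).le) ha hb
  have hA := summable_one_div_sq_mul_one_div_add_sq (fun i => (ha₀ i).le) hb₀ ha hb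
  have hB : Summable fun p : κ × ι => 1 / b p.1 ^ 2 * (1 / (a p.2 + b p.1) ^ 2) := by
    simpa only [add_comm] using
      summable_one_div_sq_mul_one_div_add_sq (fun k => (hb₀ k).le) ha₀ hb ha
  have hA_swap : Summable fun p : κ × ι => 1 / a p.2 ^ 2 * (1 / (a p.2 + b p.1) ^ 2) :=
    hA.prod_symm
  have expand (p : κ × ι) := one_div_sq_mul_one_div_sq_eq (ha₀ p.2).ne' (hb₀ p.1).ne'
    (add_pos (ha₀ p.2) (hb₀ p.1)).ne'
  calc (∑' i, 1 / a i ^ 2) * ∑' k, 1 / b k ^ 2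
      = ∑' p : κ × ι, 1 / a p.2 ^ 2 * (1 / b p.1 ^ 2) := by
        rw [ha.tsum_mul_tsum hb (summable_one_div_sq_mul_one_div_sq ha hb)]
        exact ((Equiv.prodComm κ ι).tsum_eq _).symm
    _ = 2 * (∑' p : κ × ι, 1 / b p.1 ^ 2 * (1 / (a p.2 * (a p.2 + b p.1))))
          - (∑' p : κ × ι, 1 / b p.1 ^ 2 * (1 / (a p.2 + b p.1) ^ 2))
          + ∑' p : κ × ι, 1 / a p.2 ^ 2 * (1 / (a p.2 + b p.1) ^ 2) := by
        rw [tsum_congr expand, ((hS.mul_left 2).sub hB).tsum_add hA_swap,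
          (hS.mul_left 2).tsum_sub hB, tsum_mul_left]
    _ = 2 * (∑' k, 1 / b k ^ 2 * ∑' i, 1 / (a i * (a i + b k)))
          - (∑' k, 1 / b k ^ 2 * ∑' i, 1 / (a i + b k) ^ 2)
          + ∑' i, 1 / a i ^ 2 * ∑' k, 1 / (a i + b k) ^ 2 := by
        rw [hS.tsum_prod, hB.tsum_prod, hA_swap.tsum_prod,
          Summable.tsum_comm (f := fun i k => 1 / a i ^ 2 * (1 / (a i + b k) ^ 2)) hA]
        simp only [tsum_mul_left]

end PartialFractions

theorem polygamma_one_add_one (y : ℝ) :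
    polygamma 1 (y + 1) = ∑' n : ℕ, 1 / ((n : ℝ) + 1 + y) ^ 2 := by
  have hexp : -(((1 : ℕ) : ℤ) + 1) = -((2 : ℕ) : ℤ) := by norm_num
  simp only [polygamma, hexp, zpow_neg, zpow_natCast, one_div]
  norm_num [add_left_comm, add_comm]

theorem tsum_one_div_add_mul_sq_eq_polygamma {x : ℝ} (hx : x ≠ 0) (y : ℝ) :
    ∑' n : ℕ, 1 / (y + ((n : ℝ) + 1) * x) ^ 2 = polygamma 1 (y / x + 1) / x ^ 2 := by
  rw [polygamma_one_add_one, ← tsum_div_const]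
  refine tsum_congr fun n => ?_
  rw [div_div, ← mul_pow, add_mul _ (y / x), div_mul_cancel₀ y hx, add_comm]

theorem tsum_one_div_mul_add_eq_psi {y : ℝ} (hy₀ : y ≠ 0)
    (hy : ∀ n : ℕ, (n : ℝ) + 1 + y ≠ 0) :
    ∑' n : ℕ, 1 / (((n : ℝ) + 1) * ((n : ℝ) + 1 + y)) =
      (Real.eulerMascheroniConstant + psi (y + 1)) / y := by
  rw [psi, add_neg_cancel_left, ← tsum_div_const]
  refine tsum_congr fun n => ?_
  have := hy n
  rw [add_comm y, ← add_assoc]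
  field_simp
  ring

theorem hasSum_one_div_add_one_sq :
    HasSum (fun n : ℕ => 1 / ((n : ℝ) + 1) ^ 2) (Real.pi ^ 2 / 6) := by
  simpa using (hasSum_nat_add_iff' 1).mpr hasSum_zeta_two

theorem hasSum_one_div_add_one_mul_sq (x : ℝ) :
    HasSum (fun m : ℕ => 1 / (((m : ℝ) + 1) * x) ^ 2) (Real.pi ^ 2 / 6 / x ^ 2) := by
  simpa only [mul_pow, div_div] using hasSum_one_div_add_one_sq.div_const (x ^ 2)

theorem statement12 (x : ℝ) (hx : 0 < x) :
    (-(∑' m : ℕ, polygamma 1 (((m : ℝ) + 1) * x + 1) / ((m : ℝ) + 1) ^ 2)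
        + (∑' m : ℕ, polygamma 1 (((m : ℝ) + 1) / x + 1) / ((m : ℝ) + 1) ^ 2)
        + (2 / x) * ∑' m : ℕ,
            (Real.eulerMascheroniConstant + psi (((m : ℝ) + 1) * x + 1)) / ((m : ℝ) + 1) ^ 3
      = Real.pi ^ 4 / 36) ∧
    (riemannZeta 2) ^ 2 = ((Real.pi ^ 4 / 36 : ℝ) : ℂ) := by
  refine ⟨?_, by rw [riemannZeta_two]; push_cast; ring⟩
  have hmx (m : ℕ) : 0 < ((m : ℝ) + 1) * x := by positivity
  have hψ (m : ℕ) := tsum_one_div_mul_add_eq_psi (hmx m).ne' fun n => by positivity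
  have double_sum := tsum_one_div_sq_mul_tsum_one_div_sq (fun n : ℕ => n.cast_add_one_pos) hmx
    hasSum_one_div_add_one_sq.summable (hasSum_one_div_add_one_mul_sq x).summable
  simp only [hasSum_one_div_add_one_sq.tsum_eq, (hasSum_one_div_add_one_mul_sq x).tsum_eq, hψ,
    ← polygamma_one_add_one, tsum_one_div_add_mul_sq_eq_polygamma hx.ne'] at double_sum
  have factor_ψ (c d : ℝ) : 1 / (c * x) ^ 2 * (d / (c * x)) = d / c ^ 3 / x ^ 3 := by ring
  have factor_mx (c d : ℝ) : 1 / (c * x) ^ 2 * d = d / c ^ 2 / x ^ 2 := by ring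
  have factor_n (c d : ℝ) : 1 / c ^ 2 * (d / x ^ 2) = d / c ^ 2 / x ^ 2 := by ring
  simp only [factor_ψ, factor_mx, factor_n, tsum_div_const] at double_sum
  field_simp at double_sum ⊢
  linear_combination -double_sum
end

section
/- Let r ∈ ℕ with r ≥ 2, let t ∈ ℕ∪{0}, and let x>0. Let G(s) be the analytic continuation of Θ(r,s,t,x) in the second variable defined in the context. Then G has a simple pole at s₀ := 1−t with residue x^{−t} ζ(r), and lim_{s→s₀} ( G(s) − x^{−t} ζ(r)/(s−s₀) ) = γ ζ(r) x^{−t} + (−1)^r ∑_{j=0}^{t−2} C(j+r−1,j) ((−1)^{t−j}/(t−j−1)!) x^{−(j+r)} ∑_{m=1}^∞ ψ^{(t−j−1)}(mx+1)/m^{r+j−t+1} + ∑_{i=1}^{r−2} (−1)^i x^{−(t+i)} C(i+t−1,i) ζ(i+1) ζ(r−i) − (−1)^r x^{1−r−t} C(r+t−2,t−1) ∑_{m=1}^∞ ( γ + ψ(mx+1) )/m^{r}, the limit being taken through Re(s) > 2−r−t. -/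
open Complex Filter Set

/-- The analytic continuation `G(s)` of `Θ(r,s,t,x)` in the second variable
(Theorem `THM-EVAL` / `KLF in s`). -/
noncomputable def G (r t : ℕ) (x : ℝ) (s : ℂ) : ℂ :=
  ∑ i ∈ Finset.range (r - 1),
      (-1 : ℂ) ^ i * (x : ℂ) ^ (-((t : ℤ) + i)) * ((binomC ((i : ℤ) + t - 1) i : ℤ) : ℂ) *
        riemannZeta (s + (t : ℂ) + (i : ℂ)) * riemannZeta ((r : ℂ) - (i : ℂ))
  - (-1 : ℂ) ^ r * (x : ℂ) ^ (1 - (r : ℤ) - (t : ℤ)) *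
      ((binomC ((r : ℤ) + t - 2) ((t : ℤ) - 1) : ℤ) : ℂ) *
      ∑' m : ℕ, ((Real.eulerMascheroniConstant + psi (((m : ℝ) + 1) * x + 1) : ℝ) : ℂ) /
        ((m + 1 : ℕ) : ℂ) ^ ((r : ℂ) + s + (t : ℂ) - 1)
  + (-1 : ℂ) ^ r * ∑ j ∈ Finset.range (t - 1),
      ((binomC ((j : ℤ) + r - 1) j : ℤ) : ℂ) *
        ((-1 : ℂ) ^ (t - j) / ((t - j - 1).factorial : ℂ)) * (x : ℂ) ^ (-((j : ℤ) + r)) *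
        ∑' m : ℕ, ((polygamma (t - j - 1) (((m : ℝ) + 1) * x + 1) : ℝ) : ℂ) /
          ((m + 1 : ℕ) : ℂ) ^ ((r : ℂ) + s + (j : ℂ))

/-!
The only summand of `G` that is singular at `1 - t` is the one with `i = 0` in the first sum, namely
`x ^ (-t) * ζ(r) * ζ(s + t)`; the Laurent expansion `ζ(s + t) = 1 / (s - (1 - t)) + γ + o(1)` gives
the pole and the term in `γ`. The remaining summands are holomorphic near `1 - t`: the bounds
`γ + ψ(y + 1) = O(y ^ ε)` and `ψ^{(k)}(y + 1) = O(y ^ (-k + ε))` show that the Dirichlet series in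
`ψ` and `ψ^{(k)}` converge absolutely to the right of `1` and `1 - k`, and at `s = 1 - t` they are
evaluated at `r ≥ 2` and `r + j - t + 1 = r - k`, where `k = t - j - 1`.
-/

/-- The Dirichlet series `∑_{m ≥ 1} (γ + ψ(m x + 1)) / m ^ w`. -/
noncomputable def psiSeries (x : ℝ) : ℂ → ℂ :=
  LSeries fun n => ((Real.eulerMascheroniConstant + psi (n * x + 1) : ℝ) : ℂ)

/-- The Dirichlet series `∑_{m ≥ 1} ψ^{(k)}(m x + 1) / m ^ w`. -/
noncomputable def polygammaSeries (k : ℕ) (x : ℝ) : ℂ → ℂ :=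
  LSeries fun n => ((polygamma k (n * x + 1) : ℝ) : ℂ)

/-- The function `G` without the summand `x ^ (-t) * ζ(r) * ζ(s + t)`, the only one with a pole at
`s = 1 - t`. -/
noncomputable def regularPart (r t : ℕ) (x : ℝ) (s : ℂ) : ℂ :=
  ∑ i ∈ Finset.Icc 1 (r - 2),
      (-1 : ℂ) ^ i * (x : ℂ) ^ (-((t : ℤ) + i)) * ((binomC ((i : ℤ) + t - 1) i : ℤ) : ℂ) *
        riemannZeta (s + (t : ℂ) + (i : ℂ)) * riemannZeta ((r : ℂ) - (i : ℂ))
  - (-1 : ℂ) ^ r * (x : ℂ) ^ (1 - (r : ℤ) - (t : ℤ)) *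
      ((binomC ((r : ℤ) + t - 2) ((t : ℤ) - 1) : ℤ) : ℂ) * psiSeries x ((r : ℂ) + s + (t : ℂ) - 1)
  + (-1 : ℂ) ^ r * ∑ j ∈ Finset.range (t - 1),
      ((binomC ((j : ℤ) + r - 1) j : ℤ) : ℂ) *
        ((-1 : ℂ) ^ (t - j) / ((t - j - 1).factorial : ℂ)) * (x : ℂ) ^ (-((j : ℤ) + r)) *
        polygammaSeries (t - j - 1) x ((r : ℂ) + s + (j : ℂ))

section Growth

lemma rpow_neg_add_le_mul_rpow_neg {a b p q : ℝ} (ha : 0 < a) (hb : 0 < b) (hp : 0 ≤ p)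
    (hq : 0 ≤ q) : (a + b) ^ (-(p + q)) ≤ a ^ (-p) * b ^ (-q) := by
  rw [neg_add, Real.rpow_add (add_pos ha hb)]
  gcongr ?_ * ?_
  · exact Real.rpow_le_rpow_of_nonpos ha (by linarith) (by linarith)
  · exact Real.rpow_le_rpow_of_nonpos hb (by linarith) (by linarith)

lemma abs_tsum_le_of_abs_le_succ_rpow_mul {u : ℕ → ℝ} {ε c : ℝ} (hε : 0 < ε)
    (hu : ∀ n, |u n| ≤ ((n : ℝ) + 1) ^ (-(1 + ε)) * c) :
    |∑' n, u n| ≤ (∑' n : ℕ, ((n : ℝ) + 1) ^ (-(1 + ε))) * c := by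
  have hsummable : Summable fun n : ℕ => ((n : ℝ) + 1) ^ (-(1 + ε)) := by
    have h := Real.summable_nat_rpow.2 (show -(1 + ε) < -1 by linarith)
    simpa only [Nat.cast_add_one] using (summable_nat_add_iff 1).2 h
  exact tsum_of_norm_bounded (f := u) (hsummable.hasSum.mul_right c) hu

variable {ε y : ℝ}

lemma abs_eulerMascheroniConstant_add_psi_le (hε : 0 < ε) (hε' : ε ≤ 1) (hy : 0 < y) :
    |Real.eulerMascheroniConstant + psi (y + 1)| ≤
      (∑' n : ℕ, ((n : ℝ) + 1) ^ (-(1 + ε))) * y ^ ε := by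
  rw [psi, add_neg_cancel_left]
  refine abs_tsum_le_of_abs_le_succ_rpow_mul hε fun n => ?_
  set b : ℝ := (n : ℝ) + 1
  have hb : 0 < b := by positivity
  have hterm : 1 / b - 1 / (n + (y + 1)) = y * b⁻¹ * (b + y)⁻¹ := by
    rw [show (n : ℝ) + (y + 1) = b + y by ring]
    field_simp
    ring
  have hinv : (b + y)⁻¹ ≤ b ^ (-ε) * y ^ (-(1 - ε)) := by
    simpa only [add_sub_cancel, Real.rpow_neg_one] using
      rpow_neg_add_le_mul_rpow_neg hb hy hε.le (sub_nonneg.2 hε')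
  calc |1 / b - 1 / (n + (y + 1))| = y * b⁻¹ * (b + y)⁻¹ := by
        rw [hterm, abs_of_pos (by positivity)]
    _ ≤ y * b⁻¹ * (b ^ (-ε) * y ^ (-(1 - ε))) := by gcongr
    _ = b ^ (-(1 + ε)) * y ^ ε := by
        rw [neg_add, Real.rpow_add hb, Real.rpow_neg_one, neg_sub, Real.rpow_sub_one hy.ne']
        field_simp

lemma abs_polygamma_add_one_le {k : ℕ} (hε : 0 < ε) (hk : ε ≤ k) (hy : 0 < y) :
    |polygamma k (y + 1)| ≤
      k.factorial * (∑' n : ℕ, ((n : ℝ) + 1) ^ (-(1 + ε))) * y ^ (-k + ε) := by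
  rw [polygamma, abs_mul, abs_mul, abs_neg_one_pow, one_mul, Nat.abs_cast, mul_assoc]
  gcongr
  refine abs_tsum_le_of_abs_le_succ_rpow_mul hε fun n => ?_
  have hsum : (n : ℝ) + (y + 1) = (n + 1) + y := by ring
  have hexp : ((-((k : ℤ) + 1) : ℤ) : ℝ) = -((1 + ε) + (k - ε)) := by push_cast; ring
  rw [abs_of_pos (by positivity), ← Real.rpow_intCast, hsum, hexp,
    show -(k : ℝ) + ε = -(k - ε) by ring]
  exact rpow_neg_add_le_mul_rpow_neg (by positivity) hy (by positivity) (sub_nonneg.2 hk)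

end Growth

section DirichletSeries

lemma tsum_succ_div_cpow_eq_LSeries (f : ℕ → ℂ) (w : ℂ) :
    ∑' m : ℕ, f (m + 1) / ((m + 1 : ℕ) : ℂ) ^ w = LSeries f w := by
  have hsupport : Function.support (LSeries.term f w) ⊆ Set.range Nat.succ := by
    rintro (_ | n) hn
    · exact absurd (LSeries.term_zero f w) hn
    · exact ⟨n, rfl⟩
  rw [LSeries, ← Nat.succ_injective.tsum_eq hsupport]
  exact tsum_congr fun m => (LSeries.term_of_ne_zero m.succ_ne_zero f w).symm

lemma tsum_psi_div_cpow (x : ℝ) (w : ℂ) :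
    ∑' m : ℕ, ((Real.eulerMascheroniConstant + psi (((m : ℝ) + 1) * x + 1) : ℝ) : ℂ) /
      ((m + 1 : ℕ) : ℂ) ^ w = psiSeries x w := by
  simp only [psiSeries, ← tsum_succ_div_cpow_eq_LSeries, Nat.cast_add_one]

lemma tsum_polygamma_div_cpow (k : ℕ) (x : ℝ) (w : ℂ) :
    ∑' m : ℕ, ((polygamma k (((m : ℝ) + 1) * x + 1) : ℝ) : ℂ) / ((m + 1 : ℕ) : ℂ) ^ w =
      polygammaSeries k x w := by
  simp only [polygammaSeries, ← tsum_succ_div_cpow_eq_LSeries, Nat.cast_add_one]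

lemma abscissaOfAbsConv_comp_mul_le {g : ℝ → ℝ} {p : ℝ}
    (hg : ∀ ε ∈ Ioo (0 : ℝ) 1, ∃ C, ∀ y > 0, |g y| ≤ C * y ^ (p + ε)) {x : ℝ} (hx : 0 < x) :
    LSeries.abscissaOfAbsConv (fun n => (g (n * x) : ℂ)) ≤ (p + 1 : ℝ) := by
  refine LSeries.abscissaOfAbsConv_le_of_forall_lt_LSeriesSummable fun σ hσ => ?_
  obtain ⟨ε, hε, hεσ⟩ := exists_between (lt_min one_pos (sub_pos.2 hσ))
  obtain ⟨C, hC⟩ := hg ε ⟨hε, hεσ.trans_le (min_le_left _ _)⟩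
  have hlt : p + ε + 1 < σ := by linarith [hεσ.trans_le (min_le_right _ _)]
  refine LSeriesSummable_of_le_const_mul_rpow (x := p + ε + 1) hlt
    ⟨C * x ^ (p + ε), fun n hn => ?_⟩
  have hn' : (0 : ℝ) < n := by positivity
  calc ‖(g (n * x) : ℂ)‖ = |g (n * x)| := by rw [Complex.norm_real, Real.norm_eq_abs]
    _ ≤ C * (n * x) ^ (p + ε) := hC _ (by positivity)
    _ = C * x ^ (p + ε) * n ^ (p + ε + 1 - 1) := by
        rw [Real.mul_rpow hn'.le hx.le, add_sub_cancel_right]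
        ring

variable {x : ℝ} {w : ℂ}

lemma differentiableAt_psiSeries (hx : 0 < x) (hw : 1 < w.re) :
    DifferentiableAt ℂ (psiSeries x) w := by
  have habscissa := abscissaOfAbsConv_comp_mul_le (p := 0)
    (g := fun y => Real.eulerMascheroniConstant + psi (y + 1)) (fun ε hε => ⟨_, fun y hy => by
      simpa only [zero_add] using abs_eulerMascheroniConstant_add_psi_le hε.1 hε.2.le hy⟩) hx
  refine (LSeries_hasDerivAt (habscissa.trans_lt ?_)).differentiableAt
  exact EReal.coe_lt_coe (by linarith)

lemma differentiableAt_polygammaSeries {k : ℕ} (hk : 1 ≤ k) (hx : 0 < x) (hw : 1 < w.re + k) :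
    DifferentiableAt ℂ (polygammaSeries k x) w := by
  have hk' : (1 : ℝ) ≤ k := by exact_mod_cast hk
  have habscissa := abscissaOfAbsConv_comp_mul_le (p := -k)
    (g := fun y => polygamma k (y + 1))
    (fun ε hε => ⟨_, fun y => abs_polygamma_add_one_le hε.1 (hε.2.le.trans hk')⟩) hx
  refine (LSeries_hasDerivAt (habscissa.trans_lt ?_)).differentiableAt
  exact EReal.coe_lt_coe (by linarith)

end DirichletSeries

section Decomposition

lemma binomC_zero_right {a : ℤ} (ha : -1 ≤ a) : binomC a 0 = 1 := by
  rcases ha.eq_or_lt with rfl | ha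
  · simp [binomC]
  · simp [binomC, ha.ne', show ¬a < 0 by lia]

lemma G_eq_zeta_mul_add_regularPart {r : ℕ} (hr : 2 ≤ r) (t : ℕ) (x : ℝ) (s : ℂ) :
    G r t x s =
      riemannZeta (s + t) * ((x : ℂ) ^ (-(t : ℤ)) * riemannZeta r) + regularPart r t x s := by
  have hrange : Finset.range (r - 1) = insert 0 (Finset.Icc 1 (r - 2)) := by
    ext i
    simp only [Finset.mem_range, Finset.mem_insert, Finset.mem_Icc]
    lia
  have hbinom : binomC ((t : ℤ) - 1) 0 = 1 := binomC_zero_right (by lia)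
  rw [G, hrange, Finset.sum_insert (by simp)]
  simp only [regularPart, tsum_psi_div_cpow, tsum_polygamma_div_cpow, Nat.cast_zero, zero_add,
    add_zero, sub_zero, pow_zero, one_mul, hbinom, Int.cast_one, mul_one]
  ring

lemma differentiableAt_regularPart {r t : ℕ} {x : ℝ} {s : ℂ} (hx : 0 < x)
    (hs : 2 - (r : ℝ) - t < s.re) (hpole : ∀ i ∈ Finset.Icc 1 (r - 2), s + t + i ≠ 1) :
    DifferentiableAt ℂ (regularPart r t x) s := by
  have hzeta : ∀ i ∈ Finset.Icc 1 (r - 2),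
      DifferentiableAt ℂ (fun s => riemannZeta (s + t + i)) s := fun i hi =>
    (differentiableAt_riemannZeta (hpole i hi)).comp s (by fun_prop)
  have hpsi : DifferentiableAt ℂ (fun s => psiSeries x (r + s + t - 1)) s := by
    have hre : 1 < (r + s + t - 1 : ℂ).re := by
      simp only [sub_re, add_re, natCast_re, one_re]
      linarith
    exact (differentiableAt_psiSeries hx hre).comp s (by fun_prop)
  have hpolygamma : ∀ j ∈ Finset.range (t - 1),
      DifferentiableAt ℂ (fun s => polygammaSeries (t - j - 1) x (r + s + j)) s := fun j hj => by
    rw [Finset.mem_range] at hj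
    have hcast : ((t - j - 1 : ℕ) : ℝ) = t - j - 1 := by
      rw [Nat.cast_sub (by lia), Nat.cast_sub (by lia), Nat.cast_one]
    have hre : 1 < (r + s + j : ℂ).re + (t - j - 1 : ℕ) := by
      simp only [add_re, natCast_re, hcast]
      linarith
    exact (differentiableAt_polygammaSeries (by lia) hx hre).comp s (by fun_prop)
  exact ((DifferentiableAt.fun_sum fun i hi => ((hzeta i hi).const_mul _).mul_const _).sub
    (hpsi.const_mul _)).add
      ((DifferentiableAt.fun_sum fun j hj => (hpolygamma j hj).const_mul _).const_mul _)

lemma tendsto_riemannZeta_add_sub_one_div (a : ℂ) :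
    Tendsto (fun s => riemannZeta (s + a) - 1 / (s - (1 - a))) (nhdsWithin (1 - a) {1 - a}ᶜ)
      (nhds Real.eulerMascheroniConstant) := by
  have hshift : Tendsto (fun s => s + a) (nhdsWithin (1 - a) {1 - a}ᶜ) (nhdsWithin 1 {1}ᶜ) := by
    have hcont : ContinuousAt (fun s => s + a) (1 - a) := by fun_prop
    rw [ContinuousAt, sub_add_cancel] at hcont
    refine tendsto_nhdsWithin_iff.2 ⟨hcont.mono_left nhdsWithin_le_nhds, ?_⟩
    filter_upwards [self_mem_nhdsWithin] with s hs h
    exact hs (eq_sub_of_add_eq h)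
  refine (tendsto_riemannZeta_sub_one_div.comp hshift).congr fun s => ?_
  rw [Function.comp_apply, sub_sub_eq_add_sub]

lemma tendsto_G_sub_pole {r : ℕ} (hr : 2 ≤ r) (t : ℕ) {x : ℝ} (hx : 0 < x) :
    Tendsto (fun s => G r t x s - (x : ℂ) ^ (-(t : ℤ)) * riemannZeta r / (s - (1 - (t : ℂ))))
      (nhdsWithin (1 - (t : ℂ)) {1 - (t : ℂ)}ᶜ)
      (nhds (Real.eulerMascheroniConstant * ((x : ℂ) ^ (-(t : ℤ)) * riemannZeta r) +
        regularPart r t x (1 - t))) := by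
  have hr' : (2 : ℝ) ≤ r := by exact_mod_cast hr
  have hpole : ∀ i ∈ Finset.Icc 1 (r - 2), (1 - t : ℂ) + t + i ≠ 1 := fun i hi => by
    simpa using Nat.one_le_iff_ne_zero.1 (Finset.mem_Icc.1 hi).1
  have hre : 2 - (r : ℝ) - t < (1 - t : ℂ).re := by
    simp only [sub_re, one_re, natCast_re]
    linarith
  have hregular : ContinuousAt (regularPart r t x) (1 - t) :=
    (differentiableAt_regularPart hx hre hpole).continuousAt
  refine (((tendsto_riemannZeta_add_sub_one_div t).mul_const _).add
    (hregular.mono_left nhdsWithin_le_nhds)).congr fun s => ?_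
  rw [G_eq_zeta_mul_add_regularPart hr]
  ring

lemma regularPart_one_sub (r t : ℕ) (x : ℝ) :
    regularPart r t x (1 - t) =
      ∑ i ∈ Finset.Icc 1 (r - 2),
          (-1 : ℂ) ^ i * (x : ℂ) ^ (-((t : ℤ) + i)) * ((binomC ((i : ℤ) + t - 1) i : ℤ) : ℂ) *
            riemannZeta ((i : ℂ) + 1) * riemannZeta ((r : ℂ) - (i : ℂ))
      - (-1 : ℂ) ^ r * (x : ℂ) ^ (1 - (r : ℤ) - (t : ℤ)) *
          ((binomC ((r : ℤ) + t - 2) ((t : ℤ) - 1) : ℤ) : ℂ) * psiSeries x r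
      + (-1 : ℂ) ^ r * ∑ j ∈ Finset.range (t - 1),
          ((binomC ((j : ℤ) + r - 1) j : ℤ) : ℂ) *
            ((-1 : ℂ) ^ (t - j) / ((t - j - 1).factorial : ℂ)) * (x : ℂ) ^ (-((j : ℤ) + r)) *
            polygammaSeries (t - j - 1) x ((r : ℂ) + (j : ℂ) - (t : ℂ) + 1) := by
  have hzeta (i : ℕ) : (1 - t : ℂ) + t + i = i + 1 := by ring
  have hpsi : (r : ℂ) + (1 - t) + t - 1 = r := by ring
  have hpolygamma (j : ℕ) : (r : ℂ) + (1 - t) + j = r + j - t + 1 := by ring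
  -- `hpolygamma` also matches inside the exponent treated by `hpsi`, so it has to come second.
  simp only [regularPart, hzeta, hpsi]
  simp only [hpolygamma]

end Decomposition

theorem statement14 (r : ℕ) (hr : 2 ≤ r) (t : ℕ) (x : ℝ) (hx : 0 < x) :
    Filter.Tendsto
      (fun s : ℂ =>
        G r t x s - (x : ℂ) ^ (-(t : ℤ)) * riemannZeta (r : ℂ) / (s - (1 - (t : ℂ))))
      (nhdsWithin (1 - (t : ℂ))
        ({s : ℂ | 2 - (r : ℝ) - (t : ℝ) < s.re} \ {1 - (t : ℂ)}))
      (nhds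
        ((Real.eulerMascheroniConstant : ℂ) * riemannZeta (r : ℂ) * (x : ℂ) ^ (-(t : ℤ))
          + (-1 : ℂ) ^ r * ∑ j ∈ Finset.range (t - 1),
              ((binomC ((j : ℤ) + r - 1) j : ℤ) : ℂ) *
                ((-1 : ℂ) ^ (t - j) / ((t - j - 1).factorial : ℂ)) *
                (x : ℂ) ^ (-((j : ℤ) + r)) *
                ∑' m : ℕ, ((polygamma (t - j - 1) (((m : ℝ) + 1) * x + 1) : ℝ) : ℂ) /
                  ((m + 1 : ℕ) : ℂ) ^ ((r : ℂ) + (j : ℂ) - (t : ℂ) + 1)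
          + ∑ i ∈ Finset.Icc 1 (r - 2),
              (-1 : ℂ) ^ i * (x : ℂ) ^ (-((t : ℤ) + i)) *
                ((binomC ((i : ℤ) + t - 1) i : ℤ) : ℂ) *
                riemannZeta ((i : ℂ) + 1) * riemannZeta ((r : ℂ) - (i : ℂ))
          - (-1 : ℂ) ^ r * (x : ℂ) ^ (1 - (r : ℤ) - (t : ℤ)) *
              ((binomC ((r : ℤ) + t - 2) ((t : ℤ) - 1) : ℤ) : ℂ) *
              ∑' m : ℕ, ((Real.eulerMascheroniConstant + psi (((m : ℝ) + 1) * x + 1) : ℝ) : ℂ) /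
                ((m + 1 : ℕ) : ℂ) ^ (r : ℕ))) := by
  have hlim := (tendsto_G_sub_pole hr t hx).mono_left
    (nhdsWithin_mono _ fun s (hs : s ∈ {s : ℂ | 2 - (r : ℝ) - t < s.re} \ {1 - (t : ℂ)}) => hs.2)
  convert hlim using 2
  simp only [regularPart_one_sub, ← tsum_psi_div_cpow, ← tsum_polygamma_div_cpow, cpow_natCast]
  ring
end
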